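/- Let G be a finite abelian group with r(G) = r, and let G₀ ⊆ G be a minimal non-half-factorial LCN-set with min Δ(G₀) = max Δ*(G). Let S be the zero-sum sequence over G₀ given by the multiset containing each g ∈ G₀ with multiplicity ord(g). Then every atom A over G₀ with cross number k(A) > 1 satisfies k(A) < r, and the multiset difference S − A is again an atom over G₀. -/

import Mathlib

open Multiset

section Defs

variable {G : Type*} [AddCommGroup G]

/-- `S` is a zero-sum sequence over `G₀`: a multiset with entries in `G₀` and sum `0`. -/
def IsZeroSumSeq (G₀ : Set G) (S : Multiset G) : Prop :=
  (∀ x ∈ S, x ∈ G₀) ∧ S.sum = 0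

/-- `S` is an atom over `G₀`: a nonempty zero-sum sequence over `G₀` that is not the
union of two nonempty zero-sum sequences over `G₀`. -/
def IsAtomSeq (G₀ : Set G) (S : Multiset G) : Prop :=
  IsZeroSumSeq G₀ S ∧ S ≠ 0 ∧
    ∀ A B : Multiset G, IsZeroSumSeq G₀ A → IsZeroSumSeq G₀ B →
      A ≠ 0 → B ≠ 0 → S ≠ A + B

/-- The set of lengths of `B`: all `k` such that `B` is a union of `k` atoms over `G₀`. -/
def LengthSet (G₀ : Set G) (B : Multiset G) : Set ℕ :=
  {k | ∃ l : Multiset (Multiset G), Multiset.card l = k ∧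
      (∀ A ∈ l, IsAtomSeq G₀ A) ∧ l.sum = B}

/-- The set of successive distances of a set of naturals. -/
def DeltaOf (L : Set ℕ) : Set ℕ :=
  {d | ∃ x ∈ L, ∃ y ∈ L, x < y ∧ y - x = d ∧ ∀ z ∈ L, ¬(x < z ∧ z < y)}

/-- The set of distances `Δ(G₀)`. -/
def DeltaSet (G₀ : Set G) : Set ℕ :=
  {d | ∃ B : Multiset G, IsZeroSumSeq G₀ B ∧ B ≠ 0 ∧ d ∈ DeltaOf (LengthSet G₀ B)}

/-- `G₀` is half-factorial if `Δ(G₀) = ∅`. -/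
def IsHalfFactorialSet (G₀ : Set G) : Prop := DeltaSet G₀ = ∅

/-- `G₀` is minimal non-half-factorial if `Δ(G₀) ≠ ∅` and every proper subset is
half-factorial. -/
def IsMinNonHalfFactorial (G₀ : Set G) : Prop :=
  (DeltaSet G₀).Nonempty ∧ ∀ G₁ : Set G, G₁ ⊂ G₀ → DeltaSet G₁ = ∅

/-- The cross number `k(S) = Σ 1/ord(g)` of a multiset over `G`. -/
noncomputable def crossNumber (S : Multiset G) : ℚ :=
  (S.map (fun g => ((addOrderOf g : ℚ))⁻¹)).sum

/-- `G₀` is an LCN-set if every atom over `G₀` has cross number at least 1. -/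
def IsLCNSet (G₀ : Set G) : Prop :=
  ∀ U : Multiset G, IsAtomSeq G₀ U → 1 ≤ crossNumber U

/-- A subset of `G \ {0}` is independent if any integral linear relation on its elements
has all summands zero. -/
def IsIndependentSet (E : Set G) : Prop :=
  (0 : G) ∉ E ∧ ∀ s : Finset G, ↑s ⊆ E → ∀ f : G → ℤ,
    (∑ e ∈ s, f e • e) = 0 → ∀ e ∈ s, f e • e = 0

/-- `d` is a greatest common divisor of the set `S` of naturals. -/
def IsSetGcd (S : Set ℕ) (d : ℕ) : Prop :=
  (∀ s ∈ S, d ∣ s) ∧ ∀ e : ℕ, (∀ s ∈ S, e ∣ s) → e ∣ d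

end Defs

/-- The set of minimal distances `Δ*(G)`. -/
def DeltaStar (G : Type*) [AddCommGroup G] : Set ℕ :=
  {d | ∃ G₀ : Set G, (DeltaSet G₀).Nonempty ∧ d = sInf (DeltaSet G₀)}

/-- The `p`-rank of a finite abelian group: `log_p` of the order of the `p`-torsion
subgroup `{x | p • x = 0}`. -/
noncomputable def pRank (G : Type*) [AddCommGroup G] (p : ℕ) : ℕ :=
  Nat.log p (Nat.card {x : G // p • x = 0})

/-- The rank of a finite abelian group: the maximum of the `p`-ranks over all primes. -/
noncomputable def rankG (G : Type*) [AddCommGroup G] : ℕ :=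
  sSup {r : ℕ | ∃ p : ℕ, p.Prime ∧ r = pRank G p}

/-!
Comparing lengths of powers of zero-sum sequences shows that `min Δ(G₀)` divides every difference of
lengths, and `G₀` is half-factorial if and only if all its atoms have cross number `1`. Let
`S = ∏ g ^ ord g`. For an atom `A` with `k(A) > 1`, a factorization of `S - A` into `l` atoms gives
the length `l + 1` of `S`, another one is `|G₀|`, and the LCN-property forces `l + 1 < |G₀|`. Hence
`l + min Δ(G₀) < |G₀|`, so `S - A` is an atom as soon as `|G₀| ≤ min Δ(G₀) + 2`.

Two families of sets bound `max Δ*(G)` from below: `{g, -g}` gives `ord g - 2`, and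
`insert (∑ E) E` with `E` a basis of the `p`-torsion gives `r - 1`. In both cases there are weights,
modulo a suitable number, under which all atoms have the same weight `c`; then `ord c` divides every
distance.

It remains to see that `|G₀| ≤ r + 1`. If `|G₀| ≥ r + 2`, then after removing an element of `G₀`
there is still a dependence modulo every prime, and therefore every zero-sum sequence `A` can be
extended by a product `N` of atoms of cross number `1` to another such product. So cross numbers of
atoms are integers, and those different from `1` are at least `min Δ(G₀) + 1`. Let `A` have the
least cross number different from `1` and let `g` occur in `A`. It takes fewer than
`ord g ≤ k(A) + 1` atoms of cross number `1` to make the multiplicity of `g` in `A` divisible by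
`ord g`, and by minimality of `G₀` the resulting sequence is a product of fewer than `2 k(A) + 1`
atoms of cross number `1`. An exchange argument shows that so few cannot be enough.

Finally, `k(S - A) = 1` would make `S - A` the squarefree product of all elements of `G₀`, which is
impossible because `G₀` is minimal. Hence `k(A) < |G₀| - 1 ≤ r`.
-/

section ZeroSum

variable {G : Type*} [AddCommGroup G] {G₀ G₁ : Set G} {A B C S : Multiset G}

theorem isZeroSumSeq_zero : IsZeroSumSeq G₀ 0 :=
  ⟨fun x hx => absurd hx (Multiset.notMem_zero x), Multiset.sum_zero⟩

theorem IsZeroSumSeq.add (hA : IsZeroSumSeq G₀ A) (hB : IsZeroSumSeq G₀ B) :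
    IsZeroSumSeq G₀ (A + B) :=
  ⟨fun x hx => (Multiset.mem_add.1 hx).elim (hA.1 x) (hB.1 x), by
    rw [Multiset.sum_add, hA.2, hB.2, add_zero]⟩

theorem IsZeroSumSeq.nsmul (hA : IsZeroSumSeq G₀ A) (n : ℕ) : IsZeroSumSeq G₀ (n • A) :=
  ⟨fun x hx => hA.1 x (Multiset.mem_of_mem_nsmul hx), by
    rw [Multiset.sum_nsmul, hA.2, nsmul_zero]⟩

theorem IsZeroSumSeq.mono (h : IsZeroSumSeq G₀ A) (hG : G₀ ⊆ G₁) : IsZeroSumSeq G₁ A :=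
  ⟨fun x hx => hG (h.1 x hx), h.2⟩

theorem IsZeroSumSeq.of_add_left (h : IsZeroSumSeq G₀ (A + B)) (hA : A.sum = 0) :
    IsZeroSumSeq G₀ B :=
  ⟨fun x hx => h.1 x (Multiset.mem_add.2 (Or.inr hx)), by
    simpa only [Multiset.sum_add, hA, zero_add] using h.2⟩

theorem isZeroSumSeq_sum {l : Multiset (Multiset G)} (h : ∀ A ∈ l, IsZeroSumSeq G₀ A) :
    IsZeroSumSeq G₀ l.sum :=
  Multiset.sum_induction (IsZeroSumSeq G₀) l (fun _ _ => IsZeroSumSeq.add) isZeroSumSeq_zero h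

theorem isAtomSeq_iff : IsAtomSeq G₀ A ↔
    IsZeroSumSeq G₀ A ∧ A ≠ 0 ∧ ∀ B ≤ A, B ≠ 0 → B.sum = 0 → B = A := by
  refine and_congr_right fun hA => and_congr_right fun _ => ⟨fun h B hBA hB0 hB => ?_,
    fun h B C hB _ hB0 hC0 hABC => hC0 ?_⟩
  · obtain ⟨C, rfl⟩ := Multiset.le_iff_exists_add.1 hBA
    by_contra hne
    refine h B C ⟨fun x hx => hA.1 x (Multiset.mem_add.2 (Or.inl hx)), hB⟩
      (hA.of_add_left hB) hB0 ?_ rfl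
    rintro rfl
    exact hne (add_zero B).symm
  · subst hABC
    exact left_eq_add.1 (h B (Multiset.le_add_right B C) hB0 hB.2)

theorem IsAtomSeq.eq_of_le (hA : IsAtomSeq G₀ A) (hBA : B ≤ A) (hB0 : B ≠ 0)
    (hB : B.sum = 0) : B = A :=
  (isAtomSeq_iff.1 hA).2.2 B hBA hB0 hB

theorem IsAtomSeq.of_forall_mem (hA : IsAtomSeq G₀ A) (h : ∀ x ∈ A, x ∈ G₁) : IsAtomSeq G₁ A :=
  isAtomSeq_iff.2 ⟨⟨h, hA.1.2⟩, hA.2.1, fun _ => hA.eq_of_le⟩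

theorem exists_sum_eq_of_isZeroSumSeq :
    ∀ {S : Multiset G}, IsZeroSumSeq G₀ S →
      ∃ l : Multiset (Multiset G), (∀ A ∈ l, IsAtomSeq G₀ A) ∧ l.sum = S := by
  intro S
  induction S using Multiset.strongInductionOn with
  | _ S ih =>
    intro hS
    by_cases h0 : S = 0
    · exact ⟨0, by simp, by simp [h0]⟩
    by_cases hat : IsAtomSeq G₀ S
    · exact ⟨{S}, by simpa using hat, Multiset.sum_singleton S⟩
    obtain ⟨B, C, hB, hC, hB0, hC0, rfl⟩ : ∃ B C, IsZeroSumSeq G₀ B ∧ IsZeroSumSeq G₀ C ∧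
        B ≠ 0 ∧ C ≠ 0 ∧ S = B + C := by
      by_contra! hcon
      exact hat ⟨hS, h0, hcon⟩
    obtain ⟨l, hl, rfl⟩ := ih B (lt_add_of_pos_right B (pos_iff_ne_zero.2 hC0)) hB
    obtain ⟨m, hm, rfl⟩ := ih C (lt_add_of_pos_left C (pos_iff_ne_zero.2 hB0)) hC
    exact ⟨l + m, fun A hA => (Multiset.mem_add.1 hA).elim (hl A) (hm A), Multiset.sum_add l m⟩

theorem IsZeroSumSeq.exists_isAtomSeq_add (hS : IsZeroSumSeq G₀ S) (h0 : S ≠ 0) :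
    ∃ A C, IsAtomSeq G₀ A ∧ IsZeroSumSeq G₀ C ∧ S = A + C := by
  obtain ⟨l, hl, rfl⟩ := exists_sum_eq_of_isZeroSumSeq hS
  induction l using Multiset.induction_on with
  | empty => exact absurd Multiset.sum_zero h0
  | cons A l _ =>
    rw [Multiset.sum_cons] at hS ⊢
    have hA := hl A (Multiset.mem_cons_self A l)
    exact ⟨A, l.sum, hA, hS.of_add_left hA.1.2, rfl⟩

end ZeroSum

section Lengths

variable {G : Type*} [AddCommGroup G] {G₀ : Set G} {A B : Multiset G} {x y d : ℕ}

theorem card_mem_lengthSet {l : Multiset (Multiset G)} (hl : ∀ A ∈ l, IsAtomSeq G₀ A) :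
    Multiset.card l ∈ LengthSet G₀ l.sum :=
  ⟨l, rfl, hl, rfl⟩

theorem IsAtomSeq.one_mem_lengthSet (hA : IsAtomSeq G₀ A) : 1 ∈ LengthSet G₀ A :=
  ⟨{A}, Multiset.card_singleton A, by simpa using hA, Multiset.sum_singleton A⟩

theorem isZeroSumSeq_of_mem_lengthSet (hx : x ∈ LengthSet G₀ B) : IsZeroSumSeq G₀ B := by
  obtain ⟨l, -, hl, rfl⟩ := hx
  exact isZeroSumSeq_sum fun A hA => (hl A hA).1

theorem add_mem_lengthSet (hx : x ∈ LengthSet G₀ A) (hy : y ∈ LengthSet G₀ B) :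
    x + y ∈ LengthSet G₀ (A + B) := by
  obtain ⟨l, rfl, hl, rfl⟩ := hx
  obtain ⟨m, rfl, hm, rfl⟩ := hy
  exact ⟨l + m, Multiset.card_add l m,
    fun C hC => (Multiset.mem_add.1 hC).elim (hl C) (hm C), Multiset.sum_add l m⟩

theorem nsmul_mem_lengthSet (n : ℕ) (hx : x ∈ LengthSet G₀ B) :
    n * x ∈ LengthSet G₀ (n • B) := by
  obtain ⟨l, rfl, hl, rfl⟩ := hx
  exact ⟨n • l, Multiset.card_nsmul l n, fun A hA => hl A (Multiset.mem_of_mem_nsmul hA),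
    Multiset.sum_nsmul l n⟩

theorem lengthSet_zero_subset : LengthSet G₀ 0 ⊆ {0} := by
  rintro _ ⟨l, rfl, hl, hsum⟩
  refine Multiset.card_eq_zero.2 (Multiset.eq_zero_of_forall_notMem fun A hA => ?_)
  exact (hl A hA).2.1 (Multiset.sum_eq_zero_iff.1 hsum A hA)

theorem pos_of_mem_deltaSet (hd : d ∈ DeltaSet G₀) : 0 < d := by
  obtain ⟨B, -, -, x, -, y, -, hxy, rfl, -⟩ := hd
  exact Nat.sub_pos_of_lt hxy

theorem exists_mem_deltaSet_le (hx : x ∈ LengthSet G₀ B) (hy : y ∈ LengthSet G₀ B)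
    (hxy : x < y) : ∃ d ∈ DeltaSet G₀, d ≤ y - x := by
  classical
  have hB0 : B ≠ 0 := by
    rintro rfl
    have hx0 := lengthSet_zero_subset hx
    have hy0 := lengthSet_zero_subset hy
    exact hxy.ne (hx0.trans hy0.symm)
  have hex : ∃ z, x < z ∧ z ∈ LengthSet G₀ B := ⟨y, hxy, hy⟩
  obtain ⟨hxz, hz⟩ := Nat.find_spec hex
  refine ⟨Nat.find hex - x, ⟨B, isZeroSumSeq_of_mem_lengthSet hx, hB0, x, hx, _, hz, hxz, rfl,
    fun w hw hxw => Nat.find_min hex hxw.2 ⟨hxw.1, hw⟩⟩, ?_⟩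
  exact Nat.sub_le_sub_right (Nat.find_min' hex ⟨hxy, hy⟩) x

-- If `B₀` realises the minimal distance as `a < a + d` and `y - x = q d + r`, then `q • B₀ + B`
-- has the lengths `q (a + d) + x` and `q a + y`, whose difference is `r < d`.
theorem sInf_deltaSet_dvd (hx : x ∈ LengthSet G₀ B) (hy : y ∈ LengthSet G₀ B) (hxy : x ≤ y) :
    sInf (DeltaSet G₀) ∣ y - x := by
  rcases (DeltaSet G₀).eq_empty_or_nonempty with hempty | hne
  · rcases hxy.eq_or_lt with rfl | hlt
    · simp
    · obtain ⟨d, hd, -⟩ := exists_mem_deltaSet_le hx hy hlt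
      simp [hempty] at hd
  obtain ⟨B₀, -, -, a, ha, b, hb, hab, hd, -⟩ := Nat.sInf_mem hne
  set d := sInf (DeltaSet G₀)
  set q := (y - x) / d
  have hdiv : d * q + (y - x) % d = y - x := Nat.div_add_mod (y - x) d
  have hd_pos : 0 < d := hd ▸ Nat.sub_pos_of_lt hab
  have hlong : q * b + x ∈ LengthSet G₀ (q • B₀ + B) :=
    add_mem_lengthSet (nsmul_mem_lengthSet q hb) hx
  have hshort : q * a + y ∈ LengthSet G₀ (q • B₀ + B) :=
    add_mem_lengthSet (nsmul_mem_lengthSet q ha) hy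
  have hqb : q * b = q * a + d * q := by
    rw [← hd, mul_comm (b - a), ← mul_add, Nat.add_sub_cancel' hab.le]
  refine Nat.dvd_of_mod_eq_zero (Nat.eq_zero_of_not_pos fun hr => ?_)
  obtain ⟨e, he, hle⟩ := exists_mem_deltaSet_le hlong hshort (by omega)
  have hde : d ≤ e := Nat.sInf_le he
  have hr_lt : (y - x) % d < d := Nat.mod_lt _ hd_pos
  omega

end Lengths

section Weights

theorem sum_map_sum_eq_card_nsmul {α M : Type*} [AddCommMonoid M] {w : α → M} {c : M}
    {l : Multiset (Multiset α)} (h : ∀ A ∈ l, (A.map w).sum = c) :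
    (l.sum.map w).sum = Multiset.card l • c := by
  let mapSum := Multiset.sumAddMonoidHom.comp (Multiset.mapAddMonoidHom w)
  calc (l.sum.map w).sum = (l.map fun A => (A.map w).sum).sum := map_multiset_sum mapSum l
    _ = (l.map fun _ => c).sum := by rw [Multiset.map_congr rfl h]
    _ = Multiset.card l • c := by rw [Multiset.map_const', Multiset.sum_replicate]

theorem addOrderOf_dvd_of_mem_deltaSet {G M : Type*} [AddCommGroup G] [AddCommGroup M]
    {G₀ : Set G} (w : G → M) {c : M}
    (hw : ∀ A, IsAtomSeq G₀ A → (A.map w).sum = c) {d : ℕ} (hd : d ∈ DeltaSet G₀) :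
    addOrderOf c ∣ d := by
  obtain ⟨B, -, -, x, ⟨l, rfl, hl, hlB⟩, y, ⟨m, rfl, hm, rfl⟩, hxy, rfl, -⟩ := hd
  have hlc := sum_map_sum_eq_card_nsmul fun A hA => hw A (hl A hA)
  have hmc := sum_map_sum_eq_card_nsmul fun A hA => hw A (hm A hA)
  refine addOrderOf_dvd_of_nsmul_eq_zero ?_
  rw [sub_nsmul c hxy.le, ← hlc, ← hmc, hlB, add_neg_cancel]

end Weights

section CrossNumber

variable {G : Type*} [AddCommGroup G] {G₀ : Set G} {A B : Multiset G}

theorem crossNumber_zero : crossNumber (0 : Multiset G) = 0 := rfl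

theorem crossNumber_add (A B : Multiset G) :
    crossNumber (A + B) = crossNumber A + crossNumber B := by
  simp only [crossNumber, Multiset.map_add, Multiset.sum_add]

theorem crossNumber_nonneg (A : Multiset G) : 0 ≤ crossNumber A :=
  Multiset.sum_nonneg fun _ hx => by
    obtain ⟨g, -, rfl⟩ := Multiset.mem_map.1 hx
    positivity

theorem crossNumber_nsmul (n : ℕ) (A : Multiset G) :
    crossNumber (n • A) = n * crossNumber A := by
  simp only [crossNumber, Multiset.map_nsmul, Multiset.sum_nsmul, nsmul_eq_mul]

theorem crossNumber_replicate (n : ℕ) (g : G) :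
    crossNumber (Multiset.replicate n g) = n * (addOrderOf g : ℚ)⁻¹ := by
  simp only [crossNumber, Multiset.map_replicate, Multiset.sum_replicate, nsmul_eq_mul]

theorem crossNumber_replicate_addOrderOf {g : G} (hg : IsOfFinAddOrder g) :
    crossNumber (Multiset.replicate (addOrderOf g) g) = 1 := by
  rw [crossNumber_replicate, mul_inv_cancel₀ (Nat.cast_ne_zero.2 hg.addOrderOf_pos.ne')]

theorem crossNumber_eq_card_div {n : ℕ} (h : ∀ g ∈ A, addOrderOf g = n) :
    crossNumber A = card A / n := by
  have hmap : A.map (fun g => (addOrderOf g : ℚ)⁻¹) = A.map fun _ => (n : ℚ)⁻¹ :=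
    Multiset.map_congr rfl fun g hg => by rw [h g hg]
  rw [crossNumber, hmap, Multiset.map_const', Multiset.sum_replicate, nsmul_eq_mul, div_eq_mul_inv]

theorem crossNumber_sum_eq_card {l : Multiset (Multiset G)}
    (h : ∀ A ∈ l, crossNumber A = 1) : crossNumber l.sum = Multiset.card l := by
  rw [crossNumber, sum_map_sum_eq_card_nsmul h, nsmul_one]

theorem card_le_crossNumber_sum {l : Multiset (Multiset G)}
    (h : ∀ A ∈ l, 1 ≤ crossNumber A) : (Multiset.card l : ℚ) ≤ crossNumber l.sum := by
  induction l using Multiset.induction_on with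
  | empty => simp [crossNumber_zero]
  | cons A l ih =>
    rw [Multiset.card_cons, Multiset.sum_cons, crossNumber_add, Nat.cast_succ, add_comm]
    exact add_le_add (h A (Multiset.mem_cons_self A l))
      (ih fun B hB => h B (Multiset.mem_cons_of_mem hB))

theorem card_le_mul_crossNumber {q : ℚ} (hpos : ∀ g ∈ A, IsOfFinAddOrder g)
    (h : ∀ g ∈ A, (addOrderOf g : ℚ) ≤ q) : (Multiset.card A : ℚ) ≤ q * crossNumber A := by
  induction A using Multiset.induction_on with
  | empty => simp [crossNumber_zero]
  | cons g A ih =>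
    have hg : (0 : ℚ) < addOrderOf g :=
      Nat.cast_pos.2 (hpos g (Multiset.mem_cons_self g A)).addOrderOf_pos
    have hterm : 1 ≤ q * (addOrderOf g : ℚ)⁻¹ := by
      rw [← div_eq_mul_inv, one_le_div hg]
      exact h g (Multiset.mem_cons_self g A)
    have hrest := ih (fun x hx => hpos x (Multiset.mem_cons_of_mem hx))
      fun x hx => h x (Multiset.mem_cons_of_mem hx)
    rw [← Multiset.singleton_add, crossNumber_add, Multiset.card_add, mul_add, Nat.cast_add]
    refine add_le_add ?_ hrest
    simpa [crossNumber] using hterm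

end CrossNumber

section FiniteOrder

variable {G : Type*} [AddCommGroup G] {G₀ : Set G} {A B : Multiset G} {g : G}

theorem sum_replicate_addOrderOf (g : G) : (Multiset.replicate (addOrderOf g) g).sum = 0 := by
  rw [Multiset.sum_replicate, addOrderOf_nsmul_eq_zero]

theorem replicate_addOrderOf_ne_zero (hg : IsOfFinAddOrder g) :
    Multiset.replicate (addOrderOf g) g ≠ 0 := by
  rw [← Multiset.card_pos, Multiset.card_replicate]
  exact hg.addOrderOf_pos

theorem isAtomSeq_replicate_addOrderOf (hg : IsOfFinAddOrder g) (hmem : g ∈ G₀) :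
    IsAtomSeq G₀ (Multiset.replicate (addOrderOf g) g) := by
  refine isAtomSeq_iff.2 ⟨⟨fun x hx => Multiset.eq_of_mem_replicate hx ▸ hmem,
    sum_replicate_addOrderOf g⟩, replicate_addOrderOf_ne_zero hg, fun B hB hB0 hBsum => ?_⟩
  obtain ⟨n, hn, rfl⟩ := Multiset.le_replicate_iff.1 hB
  have hn0 : 0 < n := by simpa [Multiset.card_pos] using Multiset.card_pos.2 hB0
  rw [Multiset.sum_replicate] at hBsum
  rw [le_antisymm hn (addOrderOf_le_of_nsmul_eq_zero hn0 hBsum)]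

theorem IsAtomSeq.eq_replicate_addOrderOf [DecidableEq G] (hA : IsAtomSeq G₀ A)
    (hg : IsOfFinAddOrder g) (h : addOrderOf g ≤ A.count g) :
    A = Multiset.replicate (addOrderOf g) g :=
  (hA.eq_of_le (Multiset.le_count_iff_replicate_le.1 h) (replicate_addOrderOf_ne_zero hg)
    (sum_replicate_addOrderOf g)).symm

theorem IsAtomSeq.eq_replicate_of_forall_eq (hA : IsAtomSeq G₀ A) (h : ∀ x ∈ A, x = g) :
    A = Multiset.replicate (addOrderOf g) g := by
  classical
  have hrep : A = Multiset.replicate (card A) g := Multiset.eq_replicate_card.2 h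
  have hpos : 0 < card A := Multiset.card_pos.2 hA.2.1
  have hzero : card A • g = 0 := by rw [← Multiset.sum_replicate, ← hrep, hA.1.2]
  refine hA.eq_replicate_addOrderOf (isOfFinAddOrder_iff_nsmul_eq_zero.2 ⟨_, hpos, hzero⟩) ?_
  rw [Multiset.count_eq_card.2 fun x hx => (h x hx).symm]
  exact addOrderOf_le_of_nsmul_eq_zero hpos hzero

theorem IsAtomSeq.eq_pair_neg_or_eq_replicate (hA : IsAtomSeq {g, -g} A) (hne : g ≠ -g) :
    A = {g, -g} ∨ A = Multiset.replicate (addOrderOf g) g ∨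
      A = Multiset.replicate (addOrderOf g) (-g) := by
  by_cases hg : g ∈ A
  · by_cases hng : -g ∈ A
    · refine Or.inl (hA.eq_of_le ?_ (Multiset.cons_ne_zero) (by simp)).symm
      exact (Multiset.le_iff_subset (by simpa using hne)).2 (by simp [hg, hng])
    · refine Or.inr (Or.inl (hA.eq_replicate_of_forall_eq fun x hx => ?_))
      exact (hA.1.1 x hx).resolve_right fun hxg => hng (hxg ▸ hx)
  · rw [← addOrderOf_neg g]
    refine Or.inr (Or.inr (hA.eq_replicate_of_forall_eq fun x hx => ?_))
    exact (hA.1.1 x hx).resolve_left fun hxg => hg (hxg ▸ hx)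

end FiniteOrder

section CrossOne

variable {G : Type*} [AddCommGroup G] {G₀ : Set G} {A B : Multiset G}

/-- An atom over `G₀` of cross number `1`. -/
def IsCrossOneAtom (G₀ : Set G) (A : Multiset G) : Prop :=
  IsAtomSeq G₀ A ∧ crossNumber A = 1

/-- The monoid generated by the atoms of cross number `1`: the zero-sum sequences over `G₀` that
have a factorization into such atoms. -/
def crossOneMonoid (G₀ : Set G) : AddSubmonoid (Multiset G) :=
  AddSubmonoid.closure {A | IsCrossOneAtom G₀ A}

theorem mem_crossOneMonoid_iff : B ∈ crossOneMonoid G₀ ↔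
    ∃ l : Multiset (Multiset G), (∀ A ∈ l, IsCrossOneAtom G₀ A) ∧ l.sum = B :=
  ⟨fun h => AddSubmonoid.exists_multiset_of_mem_closure h, by
    rintro ⟨l, hl, rfl⟩
    exact multiset_sum_mem l fun A hA => AddSubmonoid.subset_closure (hl A hA)⟩

theorem IsCrossOneAtom.mem_crossOneMonoid (hA : IsCrossOneAtom G₀ A) : A ∈ crossOneMonoid G₀ :=
  AddSubmonoid.subset_closure hA

theorem isZeroSumSeq_of_mem_crossOneMonoid (hB : B ∈ crossOneMonoid G₀) :
    IsZeroSumSeq G₀ B := by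
  obtain ⟨l, hl, rfl⟩ := mem_crossOneMonoid_iff.1 hB
  exact isZeroSumSeq_sum fun A hA => (hl A hA).1.1

theorem exists_mem_lengthSet_of_mem_crossOneMonoid (hB : B ∈ crossOneMonoid G₀) :
    ∃ n ∈ LengthSet G₀ B, crossNumber B = n := by
  obtain ⟨l, hl, rfl⟩ := mem_crossOneMonoid_iff.1 hB
  exact ⟨_, card_mem_lengthSet fun A hA => (hl A hA).1,
    crossNumber_sum_eq_card fun A hA => (hl A hA).2⟩

theorem isCrossOneAtom_replicate_addOrderOf {g : G} (hg : IsOfFinAddOrder g) (hmem : g ∈ G₀) :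
    IsCrossOneAtom G₀ (Multiset.replicate (addOrderOf g) g) :=
  ⟨isAtomSeq_replicate_addOrderOf hg hmem, crossNumber_replicate_addOrderOf hg⟩

theorem replicate_mem_crossOneMonoid {g : G} {n : ℕ} (hg : IsOfFinAddOrder g) (hmem : g ∈ G₀)
    (hn : addOrderOf g ∣ n) : Multiset.replicate n g ∈ crossOneMonoid G₀ := by
  obtain ⟨k, rfl⟩ := hn
  rw [mul_comm, ← Multiset.nsmul_replicate]
  exact nsmul_mem (isCrossOneAtom_replicate_addOrderOf hg hmem).mem_crossOneMonoid k

theorem mem_crossOneMonoid_of_forall_dvd_count [DecidableEq G]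
    (hfin : ∀ g ∈ G₀, IsOfFinAddOrder g) (hA : ∀ g ∈ A, g ∈ G₀)
    (h : ∀ g ∈ A, addOrderOf g ∣ A.count g) : A ∈ crossOneMonoid G₀ := by
  rw [← Multiset.toFinset_sum_count_nsmul_eq A]
  refine sum_mem fun g hg => ?_
  rw [Multiset.mem_toFinset] at hg
  rw [Multiset.nsmul_singleton]
  exact replicate_mem_crossOneMonoid (hfin g (hA g hg)) (hA g hg) (h g hg)

-- Skula's criterion.
theorem isHalfFactorialSet_iff_forall_crossNumber_eq_one
    (hfin : ∀ g ∈ G₀, IsOfFinAddOrder g) :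
    IsHalfFactorialSet G₀ ↔ ∀ A, IsAtomSeq G₀ A → crossNumber A = 1 := by
  classical
  refine ⟨fun hG₀ A hA => ?_, fun h => Set.eq_empty_of_forall_notMem fun d hd => ?_⟩
  · set N := ∏ g ∈ A.toFinset, addOrderOf g
    have hN : N ≠ 0 := Finset.prod_ne_zero_iff.2 fun g hg =>
      (hfin g (hA.1.1 g (Multiset.mem_toFinset.1 hg))).addOrderOf_pos.ne'
    have hmem : N • A ∈ crossOneMonoid G₀ := by
      refine mem_crossOneMonoid_of_forall_dvd_count hfin
        (fun g hg => hA.1.1 g (Multiset.mem_of_mem_nsmul hg)) fun g hg => ?_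
      rw [Multiset.count_nsmul]
      exact (Finset.dvd_prod_of_mem _ (Multiset.mem_toFinset.2
        (Multiset.mem_of_mem_nsmul hg))).mul_right _
    obtain ⟨n, hn, hkn⟩ := exists_mem_lengthSet_of_mem_crossOneMonoid hmem
    have hNlen : N ∈ LengthSet G₀ (N • A) := by
      simpa only [mul_one] using nsmul_mem_lengthSet N hA.one_mem_lengthSet
    have hnN : n = N := by
      by_contra hne
      rcases Nat.lt_or_gt_of_ne hne with hlt | hlt
      · obtain ⟨d, hd, -⟩ := exists_mem_deltaSet_le hn hNlen hlt
        exact (hG₀ ▸ hd : d ∈ (∅ : Set ℕ))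
      · obtain ⟨d, hd, -⟩ := exists_mem_deltaSet_le hNlen hn hlt
        exact (hG₀ ▸ hd : d ∈ (∅ : Set ℕ))
    rw [crossNumber_nsmul, hnN] at hkn
    exact mul_left_cancel₀ (Nat.cast_ne_zero.2 hN) (hkn.trans (mul_one _).symm)
  · have hdvd := addOrderOf_dvd_of_mem_deltaSet (fun g => (addOrderOf g : ℚ)⁻¹) h hd
    rw [addOrderOf_eq_zero (not_isOfFinAddOrder_of_isAddTorsionFree one_ne_zero),
      zero_dvd_iff] at hdvd
    exact (pos_of_mem_deltaSet hd).ne' hdvd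

theorem deltaSet_nonempty_iff (hfin : ∀ g ∈ G₀, IsOfFinAddOrder g) :
    (DeltaSet G₀).Nonempty ↔ ∃ A, IsAtomSeq G₀ A ∧ crossNumber A ≠ 1 := by
  have hskula := (isHalfFactorialSet_iff_forall_crossNumber_eq_one hfin).not
  simpa only [IsHalfFactorialSet, ← Set.nonempty_iff_ne_empty, ← ne_eq, not_forall, exists_prop]
    using hskula

end CrossOne

section MinNonHalfFactorial

variable {G : Type*} [AddCommGroup G] {G₀ : Set G} {A B Z : Multiset G} {g : G}

theorem IsMinNonHalfFactorial.crossNumber_eq_one_of_notMem (hmin : IsMinNonHalfFactorial G₀)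
    (hfin : ∀ g ∈ G₀, IsOfFinAddOrder g) (hA : IsAtomSeq G₀ A) (hg : g ∈ G₀) (hgA : g ∉ A) :
    crossNumber A = 1 := by
  have hhalf : IsHalfFactorialSet (G₀ \ {g}) :=
    hmin.2 _ (Set.sdiff_singleton_ssubset.2 hg)
  refine (isHalfFactorialSet_iff_forall_crossNumber_eq_one fun x hx => hfin x hx.1).1 hhalf A
    (hA.of_forall_mem fun x hx => ⟨hA.1.1 x hx, ?_⟩)
  rintro rfl
  exact hgA hx

theorem IsMinNonHalfFactorial.mem_of_crossNumber_ne_one (hmin : IsMinNonHalfFactorial G₀)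
    (hfin : ∀ g ∈ G₀, IsOfFinAddOrder g) (hA : IsAtomSeq G₀ A) (hk : crossNumber A ≠ 1)
    (hg : g ∈ G₀) : g ∈ A :=
  by_contra fun hgA => hk (hmin.crossNumber_eq_one_of_notMem hfin hA hg hgA)

theorem IsMinNonHalfFactorial.mem_crossOneMonoid_of_notMem (hmin : IsMinNonHalfFactorial G₀)
    (hfin : ∀ g ∈ G₀, IsOfFinAddOrder g) (hB : IsZeroSumSeq G₀ B) (hg : g ∈ G₀) (hgB : g ∉ B) :
    B ∈ crossOneMonoid G₀ := by
  obtain ⟨l, hl, rfl⟩ := exists_sum_eq_of_isZeroSumSeq hB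
  refine mem_crossOneMonoid_iff.2 ⟨l, fun A hA => ⟨hl A hA, ?_⟩, rfl⟩
  exact hmin.crossNumber_eq_one_of_notMem hfin (hl A hA) hg fun hgA =>
    hgB (Multiset.mem_of_le (Multiset.single_le_sum (fun _ _ => zero_le _) A hA) hgA)

theorem IsMinNonHalfFactorial.mem_crossOneMonoid_of_dvd_count [DecidableEq G]
    (hmin : IsMinNonHalfFactorial G₀) (hfin : ∀ g ∈ G₀, IsOfFinAddOrder g)
    (hB : IsZeroSumSeq G₀ B) (hg : g ∈ G₀) (hdvd : addOrderOf g ∣ B.count g) :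
    B ∈ crossOneMonoid G₀ := by
  have hsplit : Multiset.replicate (B.count g) g + B.filter (· ≠ g) = B := by
    rw [← Multiset.filter_eq', Multiset.filter_add_not]
  have hrep : Multiset.replicate (B.count g) g ∈ crossOneMonoid G₀ :=
    replicate_mem_crossOneMonoid (hfin g hg) hg hdvd
  have hrest : IsZeroSumSeq G₀ (B.filter (· ≠ g)) := by
    rw [← hsplit] at hB
    exact hB.of_add_left (isZeroSumSeq_of_mem_crossOneMonoid hrep).2
  rw [← hsplit]
  exact add_mem hrep (hmin.mem_crossOneMonoid_of_notMem hfin hrest hg (by simp))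

theorem IsAtomSeq.count_lt_addOrderOf [DecidableEq G] (hfin : ∀ g ∈ G₀, IsOfFinAddOrder g)
    (hA : IsAtomSeq G₀ A) (hk : crossNumber A ≠ 1) (hg : g ∈ G₀) :
    A.count g < addOrderOf g := by
  by_contra! hle
  rw [hA.eq_replicate_addOrderOf (hfin g hg) hle, crossNumber_replicate_addOrderOf (hfin g hg)]
    at hk
  exact hk rfl

theorem IsMinNonHalfFactorial.not_nodup (hmin : IsMinNonHalfFactorial G₀)
    (hfin : ∀ g ∈ G₀, IsOfFinAddOrder g) (hA : IsAtomSeq G₀ A) (hk : crossNumber A ≠ 1)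
    (hZ : IsCrossOneAtom G₀ Z) : ¬ Z.Nodup := by
  intro hnodup
  have hZA : Z ≤ A := (Multiset.le_iff_subset hnodup).2 fun g hg =>
    hmin.mem_of_crossNumber_ne_one hfin hA hk (hZ.1.1.1 g hg)
  exact hk (hA.eq_of_le hZA hZ.1.2.1 hZ.1.1.2 ▸ hZ.2)

theorem IsZeroSumSeq.mem_crossOneMonoid_or_exists (hB : IsZeroSumSeq G₀ B) :
    B ∈ crossOneMonoid G₀ ∨ ∃ A C, IsAtomSeq G₀ A ∧ crossNumber A ≠ 1 ∧
      IsZeroSumSeq G₀ C ∧ B = A + C := by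
  obtain ⟨l, hl, rfl⟩ := exists_sum_eq_of_isZeroSumSeq hB
  by_cases hone : ∀ A ∈ l, crossNumber A = 1
  · exact Or.inl (mem_crossOneMonoid_iff.2 ⟨l, fun A hA => ⟨hl A hA, hone A hA⟩, rfl⟩)
  · push Not at hone
    obtain ⟨A, hAl, hk⟩ := hone
    obtain ⟨m, rfl⟩ := Multiset.exists_cons_of_mem hAl
    rw [Multiset.sum_cons] at hB ⊢
    exact Or.inr ⟨A, m.sum, hl A hAl, hk, hB.of_add_left (hl A hAl).1.2, rfl⟩

end MinNonHalfFactorial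

section MixedRelations

theorem count_map_mul_le_count_sum {α : Type*} [DecidableEq α] {U : Multiset (Multiset α)}
    {c : Multiset α → α} {e : α} {n : ℕ} (h : ∀ u ∈ U, c u = e → n ≤ u.count e) :
    (U.map c).count e * n ≤ U.sum.count e := by
  induction U using Multiset.induction_on with
  | empty => simp
  | cons u U ih =>
    have hU := ih fun v hv => h v (Multiset.mem_cons_of_mem hv)
    rw [Multiset.map_cons, Multiset.sum_cons, Multiset.count_add, Multiset.count_cons, add_mul,
      add_comm]
    refine add_le_add ?_ hU
    split_ifs with hcu
    · simpa using h u (Multiset.mem_cons_self u U) hcu.symm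
    · simp

-- Otherwise every `u ∈ U` has an entry `c u` occurring more often in `u` than in `X`. Comparing
-- multiplicities, the multiset of the `c u` equals `Z`, and a repeated entry of `Z` would occur
-- too often in `U.sum`.
theorem exists_mem_le_of_add_eq_sum {α : Type*} {X Z : Multiset α} {U : Multiset (Multiset α)}
    (hU : X + Z = U.sum) (hZX : Z ⊆ X) (hnodup : ¬ Z.Nodup)
    (hcard : Multiset.card Z ≤ Multiset.card U) : ∃ u ∈ U, u ≤ X := by
  classical
  by_contra! hno
  obtain ⟨e, he⟩ : ∃ e, 1 < Z.count e := by
    simpa only [Multiset.nodup_iff_count_le_one, not_forall, not_le] using hnodup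
  have : Nonempty α := ⟨e⟩
  have hexcess : ∀ u ∈ U, ∃ a, X.count a < u.count a := fun u hu => by
    simpa only [Multiset.le_iff_count, not_forall, not_le] using hno u hu
  choose! c hc using hexcess
  have hcount (a : α) : (U.map c).count a * (X.count a + 1) ≤ X.count a + Z.count a := by
    rw [← Multiset.count_add, hU]
    exact count_map_mul_le_count_sum fun u hu hcu => hcu ▸ hc u hu
  have hle : U.map c ≤ Z := Multiset.le_iff_count.2 fun a => by
    rcases Nat.eq_zero_or_pos ((U.map c).count a) with h0 | hpos
    · simp [h0]
    · nlinarith [hcount a]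
  have hmap : U.map c = Z :=
    Multiset.eq_of_le_of_card_le hle (by rwa [Multiset.card_map])
  have heX : 0 < X.count e :=
    Multiset.count_pos.2 (hZX (Multiset.count_pos.1 (Nat.zero_lt_of_lt he)))
  have heU := hcount e
  rw [hmap] at heU
  nlinarith

variable {G : Type*} [AddCommGroup G] {G₀ : Set G} {A Z D : Multiset G}
  {U : Multiset (Multiset G)} {k₀ : ℚ}

theorem IsMinNonHalfFactorial.exists_mem_le_add (hmin : IsMinNonHalfFactorial G₀)
    (hfin : ∀ g ∈ G₀, IsOfFinAddOrder g) (hA : IsAtomSeq G₀ A) (hk : crossNumber A ≠ 1)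
    (hZ : IsCrossOneAtom G₀ Z) (hord : ∀ g ∈ G₀, (addOrderOf g : ℚ) ≤ crossNumber A + 1)
    (hU : ∀ u ∈ U, IsCrossOneAtom G₀ u) (hsum : A + Z + D = U.sum) : ∃ u ∈ U, u ≤ A + D := by
  refine exists_mem_le_of_add_eq_sum (by rw [← hsum, add_right_comm])
    (fun g hg => Multiset.mem_add.2 (Or.inl
      (hmin.mem_of_crossNumber_ne_one hfin hA hk (hZ.1.1.1 g hg))))
    (hmin.not_nodup hfin hA hk hZ) ?_
  have hcardZ : (Multiset.card Z : ℚ) ≤ crossNumber A + 1 := by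
    simpa only [hZ.2, mul_one] using card_le_mul_crossNumber
      (fun g hg => hfin g (hZ.1.1.1 g hg)) fun g hg => hord g (hZ.1.1.1 g hg)
  have hcardU : crossNumber A + 1 + crossNumber D = Multiset.card U := by
    rw [← crossNumber_sum_eq_card fun u hu => (hU u hu).2, ← hsum, crossNumber_add,
      crossNumber_add, hZ.2]
  have hD := crossNumber_nonneg D
  exact_mod_cast (by linarith : (Multiset.card Z : ℚ) ≤ Multiset.card U)

theorem IsMinNonHalfFactorial.exists_exchange (hmin : IsMinNonHalfFactorial G₀)
    (hfin : ∀ g ∈ G₀, IsOfFinAddOrder g) (hA : IsAtomSeq G₀ A) (hk : crossNumber A ≠ 1)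
    (hZ : IsCrossOneAtom G₀ Z) (hord : ∀ g ∈ G₀, (addOrderOf g : ℚ) ≤ crossNumber A + 1)
    (hD : IsZeroSumSeq G₀ D) (hU : ∀ u ∈ U, IsCrossOneAtom G₀ u) (hsum : A + Z + D = U.sum) :
    ∃ u V E, U = u ::ₘ V ∧ IsZeroSumSeq G₀ E ∧ A + D = u + E ∧ Z + E = V.sum := by
  obtain ⟨u, huU, hu⟩ := hmin.exists_mem_le_add hfin hA hk hZ hord hU hsum
  obtain ⟨V, rfl⟩ := Multiset.exists_cons_of_mem huU
  obtain ⟨E, hE⟩ := Multiset.le_iff_exists_add.1 hu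
  refine ⟨u, V, E, rfl, (hE ▸ hA.1.add hD).of_add_left (hU u huU).1.1.2, hE, ?_⟩
  rw [add_right_comm, hE, Multiset.sum_cons, add_assoc] at hsum
  rw [add_comm, add_left_cancel hsum]

-- Write `A + D = u + E` with `u ∈ U`. There is a shorter relation of the same shape, unless `E` is
-- a sum of atoms of cross number `1` and every atom dividing `D` has cross number at least `k₀`.
theorem IsMinNonHalfFactorial.two_mul_add_one_le_card (hmin : IsMinNonHalfFactorial G₀)
    (hfin : ∀ g ∈ G₀, IsOfFinAddOrder g)
    (hk₀ : ∀ A, IsAtomSeq G₀ A → crossNumber A ≠ 1 → k₀ ≤ crossNumber A)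
    (hord : ∀ g ∈ G₀, (addOrderOf g : ℚ) ≤ k₀ + 1) (hA : IsAtomSeq G₀ A)
    (hk : crossNumber A ≠ 1) (hZ : IsCrossOneAtom G₀ Z) (hD : IsZeroSumSeq G₀ D)
    (hU : ∀ u ∈ U, IsCrossOneAtom G₀ u) (hsum : A + Z + D = U.sum) :
    2 * k₀ + 1 ≤ Multiset.card U := by
  induction hn : Multiset.card U using Nat.strong_induction_on generalizing A Z D U with
  | _ n ih =>
  have hAk := hk₀ A hA hk
  obtain ⟨u, V, E, rfl, hE, hAD, hZE⟩ := hmin.exists_exchange hfin hA hk hZ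
    (fun g hg => (hord g hg).trans (add_le_add_left hAk 1)) hD hU hsum
  obtain ⟨hu, hV⟩ := Multiset.forall_mem_cons.1 hU
  rw [Multiset.card_cons] at hn
  rcases hE.mem_crossOneMonoid_or_exists with hmem | ⟨B, C, hB, hkB, hC, rfl⟩
  · obtain ⟨F, hF, rfl⟩ := mem_crossOneMonoid_iff.1 hmem
    have hkF := crossNumber_sum_eq_card fun v hv => (hF v hv).2
    have hkV : (Multiset.card V : ℚ) = 1 + Multiset.card F := by
      rw [← crossNumber_sum_eq_card fun v hv => (hV v hv).2, ← hZE, crossNumber_add, hZ.2, hkF]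
    have hkD : crossNumber A + crossNumber D = 1 + Multiset.card F := by
      rw [← crossNumber_add, hAD, crossNumber_add, hu.2, hkF]
    have hD0 : D ≠ 0 := by
      rintro rfl
      rw [add_zero] at hAD
      exact hk (hA.eq_of_le (hAD ▸ Multiset.le_add_right u _) hu.1.2.1 hu.1.1.2 ▸ hu.2)
    obtain ⟨W, C, hW, hC, rfl⟩ := hD.exists_isAtomSeq_add hD0
    rw [← hn, Nat.cast_succ, hkV]
    by_cases hkW : crossNumber W = 1
    · rw [← add_assoc, ← Multiset.sum_cons] at hAD
      have hcard : Multiset.card (u ::ₘ F) < n := by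
        rw [Multiset.card_cons, ← hn]
        exact_mod_cast (by linarith : (Multiset.card F : ℚ) + 1 < Multiset.card V + 1)
      have hbound := ih _ hcard hA hk ⟨hW, hkW⟩ hC (Multiset.forall_mem_cons.2 ⟨hu, hF⟩) hAD rfl
      rw [Multiset.card_cons, Nat.cast_succ] at hbound
      linarith
    · rw [crossNumber_add] at hkD
      linarith [hk₀ W hW hkW, crossNumber_nonneg C]
  · rw [add_left_comm, ← add_assoc] at hZE
    have hbound := ih _ (by omega) hB hkB hZ hC hV hZE rfl
    rw [← hn, Nat.cast_succ]
    linarith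

end MixedRelations

section Davenport

variable {α H : Type*} [AddCommGroup H] [Finite H]

-- Pigeonhole on the sums of the initial segments.
theorem exists_le_sum_map_eq_zero (f : α → H) {s : Multiset α} (hs : Nat.card H ≤ card s) :
    ∃ t ≤ s, t ≠ 0 ∧ (t.map f).sum = 0 := by
  induction s using Quotient.inductionOn with
  | h l =>
  have := Fintype.ofFinite H
  let initialSum (i : Fin (Fintype.card H + 1)) : H := ((l.take i).map f).sum
  obtain ⟨i, j, hij, heq⟩ : ∃ i j, i < j ∧ initialSum i = initialSum j := by
    obtain ⟨i, j, hne, heq⟩ := Fintype.exists_ne_map_eq_of_card_lt initialSum (by simp)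
    rcases lt_or_gt_of_ne hne with hlt | hlt
    exacts [⟨i, j, hlt, heq⟩, ⟨j, i, hlt, heq.symm⟩]
  have hj : (j : ℕ) ≤ l.length := by
    rw [Nat.card_eq_fintype_card] at hs
    exact (Nat.lt_succ_iff.1 j.2).trans hs
  refine ⟨((l.take j).drop i : List α),
    ((List.drop_sublist _ _).trans (List.take_sublist _ _)).subperm, ?_, ?_⟩
  · rw [ne_eq, Multiset.coe_eq_zero, List.drop_eq_nil_iff, List.length_take, min_eq_left hj]
    exact not_le.2 hij
  · have hsplit := congrArg (fun m => (m.map f).sum) (List.take_append_drop i (l.take j))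
    simp only [List.map_append, List.sum_append, List.take_take,
      min_eq_left (show (i : ℕ) ≤ j from hij.le)] at hsplit
    simpa only [Multiset.map_coe, Multiset.sum_coe] using left_eq_add.1 (heq.trans hsplit.symm)

theorem exists_le_card_lt_sum_map_eq (f : α → H) (s : Multiset α) :
    ∃ t ≤ s, card t < Nat.card H ∧ (t.map f).sum = (s.map f).sum := by
  induction s using Multiset.strongInductionOn with
  | _ s ih =>
    by_cases hs : card s < Nat.card H
    · exact ⟨s, le_rfl, hs, rfl⟩
    obtain ⟨u, hu, hu0, husum⟩ := exists_le_sum_map_eq_zero f (not_lt.1 hs)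
    obtain ⟨v, rfl⟩ := Multiset.le_iff_exists_add.1 hu
    obtain ⟨t, htv, htcard, htsum⟩ := ih v (lt_add_of_pos_left v (pos_iff_ne_zero.2 hu0))
    refine ⟨t, htv.trans (Multiset.le_add_left v u), htcard, ?_⟩
    rw [htsum, Multiset.map_add, Multiset.sum_add, husum, zero_add]

end Davenport

section MinimalAtom

variable {G : Type*} [AddCommGroup G] {G₀ : Set G} {A N : Multiset G}

theorem exists_card_lt_dvd_count_add [DecidableEq G] (hN : N ∈ crossOneMonoid G₀)
    (hAN : A + N ∈ crossOneMonoid G₀) (g : G) {n : ℕ} (hn : 0 < n) :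
    ∃ C : Multiset (Multiset G), (∀ u ∈ C, IsCrossOneAtom G₀ u) ∧ card C < n ∧
      n ∣ (A + C.sum).count g := by
  have : NeZero n := ⟨hn.ne'⟩
  obtain ⟨l, hl, hsum⟩ := mem_crossOneMonoid_iff.1 (add_mem hN (nsmul_mem hAN (n - 1)))
  let countMod : Multiset G →+ ZMod n :=
    (Nat.castAddMonoidHom (ZMod n)).comp (Multiset.countAddMonoidHom g)
  obtain ⟨C, hCl, hcard, hC⟩ := exists_le_card_lt_sum_map_eq countMod l
  rw [← map_multiset_sum, ← map_multiset_sum, hsum] at hC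
  replace hC : (C.sum.count g : ZMod n) = ((N + (n - 1) • (A + N)).count g : ZMod n) := hC
  refine ⟨C, fun u hu => hl u (Multiset.mem_of_le hCl hu), by simpa using hcard, ?_⟩
  rw [← ZMod.natCast_eq_zero_iff, Multiset.count_add, Nat.cast_add, hC]
  simp only [Multiset.count_add, Multiset.count_nsmul, Nat.cast_add, Nat.cast_mul,
    Nat.cast_pred hn, CharP.cast_eq_zero]
  ring

theorem IsMinNonHalfFactorial.add_notMem_crossOneMonoid (hmin : IsMinNonHalfFactorial G₀)
    (hfin : ∀ g ∈ G₀, IsOfFinAddOrder g) (hA : IsAtomSeq G₀ A) (hk : crossNumber A ≠ 1)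
    (hleast : ∀ B, IsAtomSeq G₀ B → crossNumber B ≠ 1 → crossNumber A ≤ crossNumber B)
    (hord : ∀ g ∈ G₀, (addOrderOf g : ℚ) ≤ crossNumber A + 1) (hN : N ∈ crossOneMonoid G₀) :
    A + N ∉ crossOneMonoid G₀ := by
  classical
  intro hAN
  obtain ⟨g, hgA⟩ := Multiset.exists_mem_of_ne_zero hA.2.1
  have hg : g ∈ G₀ := hA.1.1 g hgA
  obtain ⟨C, hC, hCcard, hdvd⟩ :=
    exists_card_lt_dvd_count_add hN hAN g (hfin g hg).addOrderOf_pos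
  have hACmem : A + C.sum ∈ crossOneMonoid G₀ := hmin.mem_crossOneMonoid_of_dvd_count hfin
    (hA.1.add (isZeroSumSeq_sum fun u hu => (hC u hu).1.1)) hg hdvd
  obtain ⟨U, hU, hUsum⟩ := mem_crossOneMonoid_iff.1 hACmem
  have hkU : (card U : ℚ) = crossNumber A + card C := by
    rw [← crossNumber_sum_eq_card fun u hu => (hU u hu).2, hUsum, crossNumber_add,
      crossNumber_sum_eq_card fun u hu => (hC u hu).2]
  obtain ⟨Z, hZ⟩ : ∃ Z, Z ∈ C := by
    refine Multiset.exists_mem_of_ne_zero ?_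
    rintro rfl
    rw [Multiset.sum_zero, add_zero] at hdvd
    exact (Nat.le_of_dvd (Multiset.count_pos.2 hgA) hdvd).not_gt
      (hA.count_lt_addOrderOf hfin hk hg)
  obtain ⟨C', rfl⟩ := Multiset.exists_cons_of_mem hZ
  obtain ⟨hZ1, hC'⟩ := Multiset.forall_mem_cons.1 hC
  rw [Multiset.sum_cons, ← add_assoc] at hUsum
  have hbound := hmin.two_mul_add_one_le_card hfin hleast hord hA hk hZ1
    (isZeroSumSeq_sum fun u hu => (hC' u hu).1.1) hU hUsum.symm
  have hCord : ((card (Z ::ₘ C') : ℕ) : ℚ) + 1 ≤ addOrderOf g := by exact_mod_cast hCcard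
  linarith [hord g hg]

end MinimalAtom

section Rank

variable {G : Type*} [AddCommGroup G]

theorem pRank_le_log_card [Finite G] (p : ℕ) : pRank G p ≤ Nat.log 2 (Nat.card G) := by
  rcases Nat.lt_or_ge 1 p with hp | hp
  · exact (Nat.log_anti_left one_lt_two hp).trans
      (Nat.log_mono_right (Nat.card_le_card_of_injective _ Subtype.val_injective))
  · exact (Nat.log_of_left_le_one hp _).trans_le (Nat.zero_le _)

theorem bddAbove_pRank [Finite G] : BddAbove {r : ℕ | ∃ p : ℕ, p.Prime ∧ r = pRank G p} := by
  refine ⟨Nat.log 2 (Nat.card G), ?_⟩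
  rintro _ ⟨p, -, rfl⟩
  exact pRank_le_log_card p

theorem pRank_le_rankG [Finite G] {p : ℕ} (hp : p.Prime) : pRank G p ≤ rankG G :=
  le_csSup bddAbove_pRank ⟨p, hp, rfl⟩

theorem exists_prime_pRank_eq_rankG [Finite G] : ∃ p : ℕ, p.Prime ∧ pRank G p = rankG G := by
  have hne : {r : ℕ | ∃ p : ℕ, p.Prime ∧ r = pRank G p}.Nonempty :=
    ⟨pRank G 2, 2, Nat.prime_two, rfl⟩
  obtain ⟨p, hp, h⟩ := Nat.sSup_mem hne bddAbove_pRank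
  exact ⟨p, hp, h.symm⟩

theorem pRank_subgroup_le [Finite G] (H : AddSubgroup G) (p : ℕ) : pRank H p ≤ pRank G p :=
  Nat.log_mono_right (Nat.card_le_card_of_injective
    (fun x : {x : H // p • x = 0} => (⟨x.1, congrArg Subtype.val x.2⟩ : {x : G // p • x = 0}))
    fun _ _ hxy => Subtype.ext (Subtype.ext (Subtype.mk.inj hxy)))

theorem finrank_modN_eq_pRank [Finite G] (p : ℕ) [Fact p.Prime] :
    Module.finrank (ZMod p) (ModN G p) = pRank G p := by
  have : Finite (ModN G p) := Quotient.finite _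
  have hcard : Nat.card (ModN G p) = Nat.card {x : G // p • x = 0} := by
    let mulP : G →+ G := (LinearMap.lsmul ℤ G p).toAddMonoidHom
    have hker : Nat.card mulP.ker = Nat.card {x : G // p • x = 0} :=
      Nat.card_congr (Equiv.subtypeEquivRight fun x => by simp [mulP, AddMonoidHom.mem_ker])
    exact (AddSubgroup.index_range (f := mulP)).trans hker
  rw [pRank, ← hcard, ← FiniteField.pow_finrank_eq_natCard p,
    Nat.log_pow (Fact.out : p.Prime).one_lt]

theorem exists_sum_nsmul_eq_nsmul_of_pRank_lt [Finite G] {ι : Type*} [Fintype ι] (v : ι → G)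
    {p : ℕ} [Fact p.Prime] (h : pRank G p < Fintype.card ι) :
    ∃ (c : ι → ℕ) (i : ι) (y : G), ∑ i, c i • v i = p • y ∧ ¬ p ∣ c i := by
  have : Finite (ModN G p) := Quotient.finite _
  have hdep : ¬ LinearIndependent (ZMod p) fun i => ModN.mkQ p (v i) := fun hli =>
    h.not_ge ((finrank_modN_eq_pRank (G := G) p) ▸ hli.fintype_card_le_finrank)
  obtain ⟨c, hc, i, hi⟩ := Fintype.not_linearIndependent_iff.1 hdep
  have hmk : ModN.mkQ p (∑ i, (c i).val • v i) = 0 := by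
    simpa only [map_sum, _root_.map_nsmul, ← Nat.cast_smul_eq_nsmul (ZMod p),
      ZMod.natCast_zmod_val] using hc
  obtain ⟨y, hy⟩ := (Submodule.Quotient.mk_eq_zero _).1 hmk
  refine ⟨fun i => (c i).val, i, y, by simpa using hy.symm, ?_⟩
  rw [← ZMod.natCast_eq_zero_iff, ZMod.natCast_zmod_val]
  exact hi

theorem exists_isZeroSumSeq_not_dvd_count [Finite G] [DecidableEq G] {G₁ : Finset G} {p : ℕ}
    (hp : p.Prime) (h : pRank G p < G₁.card) :
    ∃ X, IsZeroSumSeq (G₁ : Set G) X ∧ ∃ g ∈ G₁, ¬ p ∣ X.count g := by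
  have : Fact p.Prime := ⟨hp⟩
  let H := AddSubgroup.closure (G₁ : Set G)
  let v (g : G₁) : H := ⟨g, AddSubgroup.subset_closure g.2⟩
  obtain ⟨c, g, y, hy, hcg⟩ := exists_sum_nsmul_eq_nsmul_of_pRank_lt (p := p) v
    ((pRank_subgroup_le H p).trans_lt (by simpa using h))
  have hneg : -(y : G) ∈ AddSubmonoid.closure (G₁ : Set G) := by
    rw [← AddSubgroup.closure_toAddSubmonoid_of_finite]
    exact H.neg_mem y.2
  obtain ⟨l, hl, hlsum⟩ := AddSubmonoid.exists_multiset_of_mem_closure hneg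
  refine ⟨∑ i : G₁, Multiset.replicate (c i) (i : G) + p • l, ⟨fun x hx => ?_, ?_⟩, g, g.2, ?_⟩
  · rcases Multiset.mem_add.1 hx with hx | hx
    · obtain ⟨i, -, hi⟩ := Multiset.mem_sum.1 hx
      exact Multiset.eq_of_mem_replicate hi ▸ i.2
    · exact hl x (Multiset.mem_of_mem_nsmul hx)
  · have hyG : ∑ i : G₁, c i • (i : G) = p • (y : G) := by
      simpa [v] using congrArg Subtype.val hy
    simp only [Multiset.sum_add, Multiset.sum_sum, Multiset.sum_replicate, Multiset.sum_nsmul,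
      hyG, hlsum, smul_neg, add_neg_cancel]
  · have hcount : (∑ i : G₁, Multiset.replicate (c i) (i : G)).count (g : G) = c g := by
      simp [Multiset.count_sum', Multiset.count_replicate]
    rwa [Multiset.count_add, hcount, Multiset.count_nsmul, Nat.dvd_add_left (dvd_mul_right _ _)]

end Rank

section ManyElements

-- The multiples `m` with `m • a + n ∈ M` for some `n ∈ M` are those of a subgroup of `ℤ`.
theorem exists_add_mem_of_forall_prime {α : Type*} [AddCommMonoid α] (M : AddSubmonoid α) (a : α)
    (h : ∀ p : ℕ, p.Prime → ∃ m, ¬ p ∣ m ∧ ∃ n ∈ M, m • a + n ∈ M) : ∃ n ∈ M, a + n ∈ M := by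
  classical
  let T (m : ℕ) : Prop := ∃ n ∈ M, m • a + n ∈ M
  have hT_mul {m : ℕ} (k : ℕ) : T m → T (m * k) := fun ⟨n, hn, hmn⟩ =>
    ⟨k • n, nsmul_mem hn k, by
      rw [mul_comm, mul_nsmul', ← nsmul_add]
      exact nsmul_mem hmn k⟩
  have hT_sub {m k : ℕ} : T m → T (m + k) → T k := fun ⟨n, hn, hmn⟩ ⟨n', hn', hmn'⟩ =>
    ⟨m • a + n + n', add_mem hmn hn', by
      have hrearrange : k • a + (m • a + n + n') = (m + k) • a + n' + n := by
        rw [add_nsmul]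
        abel
      exact hrearrange ▸ add_mem hmn' hn⟩
  have hpos : ∃ m, 0 < m ∧ T m := by
    obtain ⟨m, hm, hTm⟩ := h 2 Nat.prime_two
    exact ⟨m, Nat.pos_of_ne_zero fun h0 => hm (h0 ▸ dvd_zero 2), hTm⟩
  obtain ⟨hd, hTd⟩ := Nat.find_spec hpos
  have hdvd {m : ℕ} (hm : T m) : Nat.find hpos ∣ m := by
    by_contra hndvd
    refine Nat.find_min hpos (Nat.mod_lt m hd) ⟨Nat.emod_pos_of_not_dvd hndvd, ?_⟩
    exact hT_sub (hT_mul (m / Nat.find hpos) hTd) ((Nat.div_add_mod m _).symm ▸ hm)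
  by_cases hone : Nat.find hpos = 1
  · obtain ⟨n, hn, han⟩ := hone ▸ hTd
    exact ⟨n, hn, by simpa only [one_nsmul] using han⟩
  · obtain ⟨m, hm, hTm⟩ := h _ (Nat.minFac_prime hone)
    exact absurd ((Nat.minFac_dvd _).trans (hdvd hTm)) hm

variable {G : Type*} [AddCommGroup G]

theorem IsMinNonHalfFactorial.exists_add_mem_crossOneMonoid [Finite G] {G₀ : Finset G}
    (hmin : IsMinNonHalfFactorial (G₀ : Set G)) (hcard : rankG G + 2 ≤ G₀.card)
    {A : Multiset G} (hA : IsZeroSumSeq (G₀ : Set G) A) :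
    ∃ N ∈ crossOneMonoid (G₀ : Set G), A + N ∈ crossOneMonoid (G₀ : Set G) := by
  classical
  have hfin : ∀ g ∈ (G₀ : Set G), IsOfFinAddOrder g := fun g _ => isOfFinAddOrder_of_finite g
  refine exists_add_mem_of_forall_prime _ A fun p hp => ?_
  obtain ⟨h, hh⟩ : G₀.Nonempty := Finset.card_pos.1 (by omega)
  have hpcard : pRank G p < (G₀.erase h).card := by
    have hpr := pRank_le_rankG (G := G) hp
    rw [Finset.card_erase_of_mem hh]
    omega
  obtain ⟨X, hX, g, hg, hpX⟩ := exists_isZeroSumSeq_not_dvd_count hp hpcard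
  have hX₀ : IsZeroSumSeq (G₀ : Set G) X := hX.mono (G₀.erase_subset h)
  have hXmem : X ∈ crossOneMonoid (G₀ : Set G) :=
    hmin.mem_crossOneMonoid_of_notMem hfin hX₀ hh fun hhX => G₀.notMem_erase h (hX.1 h hhX)
  refine ⟨X.count g, hpX, ((addOrderOf g - 1) * A.count g) • X, nsmul_mem hXmem _,
    hmin.mem_crossOneMonoid_of_dvd_count hfin ((hA.nsmul _).add (hX₀.nsmul _))
      (Finset.mem_of_mem_erase hg) ⟨X.count g * A.count g, ?_⟩⟩
  obtain ⟨o, ho⟩ := Nat.exists_eq_add_of_le' (addOrderOf_pos g)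
  rw [Multiset.count_add, Multiset.count_nsmul, Multiset.count_nsmul, ho, Nat.add_sub_cancel]
  ring

theorem IsAtomSeq.exists_crossNumber_eq_natCast {G₀ : Set G} {A N : Multiset G}
    (hA : IsAtomSeq G₀ A) (hk : 1 < crossNumber A) (hN : N ∈ crossOneMonoid G₀)
    (hAN : A + N ∈ crossOneMonoid G₀) :
    ∃ j : ℕ, crossNumber A = j ∧ sInf (DeltaSet G₀) + 1 ≤ j := by
  obtain ⟨n, hn, hkn⟩ := exists_mem_lengthSet_of_mem_crossOneMonoid hN
  obtain ⟨m, hm, hkm⟩ := exists_mem_lengthSet_of_mem_crossOneMonoid hAN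
  rw [crossNumber_add, hkn] at hkm
  have hlt : 1 + n < m := by
    have hcast : (1 : ℚ) + n < m := by linarith
    exact_mod_cast hcast
  have h1n : 1 + n ∈ LengthSet G₀ (A + N) :=
    add_mem_lengthSet hA.one_mem_lengthSet hn
  have hle : sInf (DeltaSet G₀) ≤ m - (1 + n) :=
    Nat.le_of_dvd (Nat.sub_pos_of_lt hlt) (sInf_deltaSet_dvd h1n hm hlt.le)
  refine ⟨m - n, ?_, by omega⟩
  rw [Nat.cast_sub (by omega), ← hkm, add_sub_cancel_right]

theorem IsMinNonHalfFactorial.card_le_rankG_add_one [Finite G] {G₀ : Finset G}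
    (hmin : IsMinNonHalfFactorial (G₀ : Set G)) (hLCN : IsLCNSet (G₀ : Set G))
    (hord : ∀ g ∈ G₀, addOrderOf g ≤ sInf (DeltaSet (G₀ : Set G)) + 2) :
    G₀.card ≤ rankG G + 1 := by
  classical
  have hfin : ∀ g ∈ (G₀ : Set G), IsOfFinAddOrder g := fun g _ => isOfFinAddOrder_of_finite g
  by_contra! hcard
  have hnat {A : Multiset G} (hA : IsAtomSeq (G₀ : Set G) A) (hk : crossNumber A ≠ 1) :
      ∃ j : ℕ, crossNumber A = j ∧ sInf (DeltaSet (G₀ : Set G)) + 1 ≤ j := by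
    obtain ⟨N, hN, hAN⟩ := hmin.exists_add_mem_crossOneMonoid hcard hA.1
    exact hA.exists_crossNumber_eq_natCast ((hLCN A hA).lt_of_ne' hk) hN hAN
  have hex : ∃ (j : ℕ) (A : Multiset G), IsAtomSeq (G₀ : Set G) A ∧ crossNumber A ≠ 1 ∧
      crossNumber A = j := by
    obtain ⟨A, hA, hk⟩ := (deltaSet_nonempty_iff hfin).1 hmin.1
    obtain ⟨j, hj, -⟩ := hnat hA hk
    exact ⟨j, A, hA, hk, hj⟩
  obtain ⟨A, hA, hk, hkA⟩ := Nat.find_spec hex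
  obtain ⟨N, hN, hAN⟩ := hmin.exists_add_mem_crossOneMonoid hcard hA.1
  refine hmin.add_notMem_crossOneMonoid hfin hA hk (fun B hB hkB => ?_) (fun g hg => ?_) hN hAN
  · obtain ⟨j, hj, -⟩ := hnat hB hkB
    rw [hkA, hj, Nat.cast_le]
    exact Nat.find_min' hex ⟨B, hB, hkB, hj⟩
  · obtain ⟨j, hj, hle⟩ := hnat hA hk
    rw [hj]
    exact_mod_cast (hord g hg).trans (by omega : _ ≤ j + 1)

end ManyElements

section DeltaStar

variable {G : Type*} [AddCommGroup G] [Finite G]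

theorem bddAbove_deltaStar : BddAbove (DeltaStar G) := by
  refine ((Set.finite_range fun G₀ : Set G => sInf (DeltaSet G₀)).subset ?_).bddAbove
  rintro _ ⟨G₀, -, rfl⟩
  exact Set.mem_range_self G₀

theorem addOrderOf_le_sSup_deltaStar {M : Type*} [AddCommGroup M] {G₀ : Set G}
    (hne : (DeltaSet G₀).Nonempty) (w : G → M) {c : M}
    (hw : ∀ A, IsAtomSeq G₀ A → (A.map w).sum = c) : addOrderOf c ≤ sSup (DeltaStar G) :=
  calc addOrderOf c ≤ sInf (DeltaSet G₀) :=
        Nat.le_of_dvd (pos_of_mem_deltaSet (Nat.sInf_mem hne))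
          (addOrderOf_dvd_of_mem_deltaSet w hw (Nat.sInf_mem hne))
    _ ≤ sSup (DeltaStar G) := le_csSup bddAbove_deltaStar ⟨G₀, hne, rfl⟩

theorem addOrderOf_natCast_zmod_mul {n k : ℕ} (hn : n ≠ 0) (hk : k ≠ 0) :
    addOrderOf (n : ZMod (n * k)) = k := by
  rw [ZMod.addOrderOf_coe n (mul_ne_zero hn hk), Nat.gcd_mul_right_left,
    Nat.mul_div_cancel_left k (Nat.pos_of_ne_zero hn)]

theorem deltaSet_nonempty_of_crossNumber_lt_one {G₀ : Set G} {S : Multiset G}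
    (hS : IsZeroSumSeq G₀ S) (h0 : S ≠ 0) (hk : crossNumber S < 1) : (DeltaSet G₀).Nonempty := by
  obtain ⟨A, C, hA, -, rfl⟩ := hS.exists_isAtomSeq_add h0
  rw [crossNumber_add] at hk
  refine (deltaSet_nonempty_iff fun g _ => isOfFinAddOrder_of_finite g).2 ⟨A, hA, ?_⟩
  linarith [crossNumber_nonneg C]

theorem deltaSet_pair_neg_nonempty {g : G} (hg : 2 < addOrderOf g) :
    (DeltaSet {g, -g}).Nonempty := by
  refine deltaSet_nonempty_of_crossNumber_lt_one (S := {g, -g}) ⟨by simp, by simp⟩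
    Multiset.cons_ne_zero ?_
  have hk : crossNumber {g, -g} = 2 / addOrderOf g := by
    simp only [crossNumber, Multiset.insert_eq_cons, Multiset.map_cons, Multiset.map_singleton,
      Multiset.sum_cons, Multiset.sum_singleton, addOrderOf_neg]
    ring
  rw [hk, div_lt_one (by positivity)]
  exact_mod_cast hg

-- All atoms over `{g, -g}` have weight `m = ord g` modulo `m (m - 2)` when `g` has weight `1` and
-- `-g` has weight `m - 1`.
theorem addOrderOf_le_sSup_deltaStar_add_two (g : G) :
    addOrderOf g ≤ sSup (DeltaStar G) + 2 := by
  classical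
  rcases Nat.lt_or_ge 2 (addOrderOf g) with hg | hsmall
  swap
  · omega
  have hne : g ≠ -g := fun h => hg.not_ge <| addOrderOf_le_of_nsmul_eq_zero two_pos <| by
    rw [two_nsmul, ← eq_neg_iff_add_eq_zero, ← h]
  obtain ⟨k, hm⟩ := Nat.exists_eq_add_of_lt hg
  let w (x : G) : ZMod (addOrderOf g * (k + 1)) := if x = g then 1 else addOrderOf g - 1
  have hwg : w g = 1 := if_pos rfl
  have hwng : w (-g) = addOrderOf g - 1 := if_neg hne.symm
  have hmod : (addOrderOf g : ZMod (addOrderOf g * (k + 1))) * (addOrderOf g - 2) = 0 := by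
    have hk : (addOrderOf g : ZMod (addOrderOf g * (k + 1))) - 2 = (k + 1 : ℕ) := by
      rw [sub_eq_iff_eq_add]
      exact_mod_cast congrArg (Nat.cast (R := ZMod _)) (by omega : addOrderOf g = k + 1 + 2)
    rw [hk, ← Nat.cast_mul, ZMod.natCast_self]
  have hbound := addOrderOf_le_sSup_deltaStar (deltaSet_pair_neg_nonempty hg) w
    (c := (addOrderOf g : ZMod _)) fun A hA => ?_
  · rw [addOrderOf_natCast_zmod_mul (by omega) (by omega)] at hbound
    omega
  rcases hA.eq_pair_neg_or_eq_replicate hne with rfl | rfl | rfl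
  · simp only [Multiset.insert_eq_cons, Multiset.map_cons, Multiset.map_singleton,
      Multiset.sum_cons, Multiset.sum_singleton, hwg, hwng, add_sub_cancel]
  · rw [Multiset.map_replicate, Multiset.sum_replicate, hwg, nsmul_one]
  · rw [Multiset.map_replicate, Multiset.sum_replicate, hwng, nsmul_eq_mul]
    linear_combination hmod

end DeltaStar

section Independent

variable {G : Type*} [AddCommGroup G] {E : Finset G} {n : ℕ}

theorem IsIndependentSet.addOrderOf_dvd (hE : IsIndependentSet (E : Set G)) {f : G → ℕ}
    (h : ∑ e ∈ E, f e • e = 0) {e : G} (he : e ∈ E) : addOrderOf e ∣ f e := by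
  refine addOrderOf_dvd_of_nsmul_eq_zero ?_
  exact_mod_cast hE.2 E subset_rfl (fun e => f e) (by exact_mod_cast h) e he

theorem IsIndependentSet.sum_notMem (hE : IsIndependentSet (E : Set G)) (hcard : 2 ≤ E.card) :
    ∑ e ∈ E, e ∉ E := by
  classical
  intro hmem
  obtain ⟨e, he, hne⟩ := Finset.exists_mem_ne hcard (∑ e ∈ E, e)
  have hsum : ∑ x ∈ E.erase (∑ e ∈ E, e), (1 : ℤ) • x = 0 := by
    simpa only [one_zsmul, add_eq_right] using Finset.sum_erase_add _ (fun x => x) hmem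
  have he0 : (1 : ℤ) • e = 0 :=
    hE.2 _ (Finset.coe_subset.2 (Finset.erase_subset _ _)) (fun _ => 1) hsum e
      (Finset.mem_erase.2 ⟨hne, he⟩)
  rw [one_zsmul] at he0
  exact hE.1 (he0 ▸ he)

theorem IsIndependentSet.addOrderOf_sum (hE : IsIndependentSet (E : Set G)) (hne : E.Nonempty)
    (hord : ∀ e ∈ E, addOrderOf e = n) : addOrderOf (∑ e ∈ E, e) = n := by
  obtain ⟨e, he⟩ := hne
  refine Nat.dvd_antisymm (addOrderOf_dvd_of_nsmul_eq_zero ?_) ?_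
  · rw [Finset.smul_sum]
    exact Finset.sum_eq_zero fun x hx => hord x hx ▸ addOrderOf_nsmul_eq_zero x
  · rw [← hord e he]
    refine hE.addOrderOf_dvd (f := fun _ => addOrderOf (∑ e ∈ E, e)) ?_ he
    rw [← Finset.smul_sum, addOrderOf_nsmul_eq_zero]

theorem sum_eq_sum_count_add_count_nsmul [DecidableEq G] {A : Multiset G}
    (hE : ∑ e ∈ E, e ∉ E) (hA : ∀ x ∈ A, x ∈ insert (∑ e ∈ E, e) E) :
    A.sum = ∑ e ∈ E, (A.count (∑ e ∈ E, e) + A.count e) • e := by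
  rw [Finset.sum_multiset_count_of_subset A (insert (∑ e ∈ E, e) E)
    fun x hx => hA x (Multiset.mem_toFinset.1 hx), Finset.sum_insert hE, Finset.smul_sum,
    ← Finset.sum_add_distrib]
  simp only [add_nsmul]

theorem IsZeroSumSeq.eq_replicate_add_nsmul_of_count_lt [DecidableEq G]
    (hE : IsIndependentSet (E : Set G)) (hcard : 2 ≤ E.card) (hord : ∀ e ∈ E, addOrderOf e = n)
    {A : Multiset G} (hA : IsZeroSumSeq (insert (∑ e ∈ E, e) E : Finset G) A) (h0 : A ≠ 0)
    (hlt : ∀ x ∈ insert (∑ e ∈ E, e) E, A.count x < n) :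
    A = Multiset.replicate (A.count (∑ e ∈ E, e)) (∑ e ∈ E, e) +
      (n - A.count (∑ e ∈ E, e)) • E.val := by
  set e₀ := ∑ e ∈ E, e
  have hmem : ∀ x ∈ A, x ∈ insert e₀ E := hA.1
  have hnotMem : e₀ ∉ E := hE.sum_notMem hcard
  have hdvd (e) (he : e ∈ E) : n ∣ A.count e₀ + A.count e :=
    hord e he ▸ hE.addOrderOf_dvd
      ((sum_eq_sum_count_add_count_nsmul hnotMem hmem).symm.trans hA.2) he
  have hpos : A.count e₀ ≠ 0 := by
    refine fun hzero => h0 (Multiset.eq_zero_of_forall_notMem fun x hx => ?_)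
    have hxE : x ∈ E := (Finset.mem_insert.1 (hmem x hx)).resolve_left fun h =>
      Multiset.count_eq_zero.1 hzero (h ▸ hx)
    have hdvdx := hdvd x hxE
    rw [hzero, zero_add] at hdvdx
    exact Multiset.count_ne_zero.2 hx (Nat.eq_zero_of_dvd_of_lt hdvdx (hlt x (hmem x hx)))
  refine Multiset.ext.2 fun x => ?_
  rw [Multiset.count_add, Multiset.count_replicate, Multiset.count_nsmul]
  by_cases hxE : x ∈ E
  · have hlt₀ := hlt e₀ (Finset.mem_insert_self _ _)
    have hltx := hlt x (Finset.mem_insert_of_mem hxE)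
    have hsum : A.count e₀ + A.count x = n :=
      Nat.eq_of_dvd_of_lt_two_mul (by omega) (hdvd x hxE) (by omega)
    rw [if_neg fun h : e₀ = x => hnotMem (h ▸ hxE), Multiset.count_eq_one_of_mem E.nodup hxE]
    omega
  · rw [Multiset.count_eq_zero.2 hxE]
    by_cases hx : e₀ = x
    · simp [← hx]
    · have hxA : x ∉ A := fun hxA => (Finset.mem_insert.1 (hmem x hxA)).elim (Ne.symm hx) hxE
      rw [if_neg hx, Multiset.count_eq_zero.2 hxA, mul_zero, add_zero]

theorem IsAtomSeq.eq_replicate_or_eq_replicate_add_nsmul (hE : IsIndependentSet (E : Set G))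
    (hcard : 2 ≤ E.card) (hn : 0 < n) (hord : ∀ e ∈ E, addOrderOf e = n) {A : Multiset G}
    (hA : IsAtomSeq (insert (∑ e ∈ E, e) (E : Set G)) A) :
    (∃ x ∈ insert (∑ e ∈ E, e) (E : Set G), A = Multiset.replicate n x) ∨
      ∃ a < n, A = Multiset.replicate a (∑ e ∈ E, e) + (n - a) • E.val := by
  classical
  rw [← Finset.coe_insert] at hA ⊢
  have hordAll : ∀ x ∈ insert (∑ e ∈ E, e) E, addOrderOf x = n :=
    (Finset.forall_mem_insert _ _ _).2
      ⟨hE.addOrderOf_sum (Finset.card_pos.1 (by omega)) hord, hord⟩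
  by_cases hlt : ∀ x ∈ insert (∑ e ∈ E, e) E, A.count x < n
  · exact Or.inr ⟨_, hlt _ (Finset.mem_insert_self _ _),
      hA.1.eq_replicate_add_nsmul_of_count_lt hE hcard hord hA.2.1 hlt⟩
  · push Not at hlt
    obtain ⟨x, hx, hcount⟩ := hlt
    refine Or.inl ⟨x, hx, ?_⟩
    rw [← hordAll x hx] at hn hcount ⊢
    exact hA.eq_replicate_addOrderOf (addOrderOf_pos_iff.1 hn) hcount

theorem exists_isZeroSumSeq_insert_sum_count_lt [DecidableEq G] (hE : IsIndependentSet (E : Set G))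
    (hcard : 2 ≤ E.card) (hn : 2 ≤ n) (hord : ∀ e ∈ E, addOrderOf e = n) :
    ∃ S, IsZeroSumSeq (insert (∑ e ∈ E, e) (E : Set G)) S ∧ S ≠ 0 ∧ ∀ x, S.count x < n := by
  have hE0 : E.Nonempty := Finset.card_pos.1 (by omega)
  refine ⟨Multiset.replicate (n - 1) (∑ e ∈ E, e) + E.val, ⟨fun x hx => ?_, ?_⟩, ?_, fun x => ?_⟩
  · exact (Multiset.mem_add.1 hx).imp Multiset.eq_of_mem_replicate id
  · have hsum : E.val.sum = ∑ e ∈ E, e := Finset.sum_val E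
    rw [Multiset.sum_add, Multiset.sum_replicate, hsum, ← succ_nsmul, Nat.sub_add_cancel (by omega),
      ← hE.addOrderOf_sum hE0 hord, addOrderOf_nsmul_eq_zero]
  · exact fun h => hE0.ne_empty (Finset.val_eq_zero.1 (add_eq_zero.1 h).2)
  · rw [Multiset.count_add, Multiset.count_replicate]
    split_ifs with h
    · rw [← h, Multiset.count_eq_zero.2 (hE.sum_notMem hcard)]
      omega
    · have := Multiset.nodup_iff_count_le_one.1 E.nodup x
      omega

theorem deltaSet_insert_sum_nonempty (hE : IsIndependentSet (E : Set G))
    (hcard : 2 ≤ E.card) (hn : 2 ≤ n) (hord : ∀ e ∈ E, addOrderOf e = n) :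
    (DeltaSet (insert (∑ e ∈ E, e) (E : Set G))).Nonempty := by
  classical
  have hordAll : ∀ x ∈ insert (∑ e ∈ E, e) (E : Set G), addOrderOf x = n :=
    Set.forall_mem_insert.2 ⟨hE.addOrderOf_sum (Finset.card_pos.1 (by omega)) hord, hord⟩
  have hfin : ∀ x ∈ insert (∑ e ∈ E, e) (E : Set G), IsOfFinAddOrder x := fun x hx =>
    addOrderOf_pos_iff.1 (by have := hordAll x hx; omega)
  obtain ⟨S, hS, hS0, hlt⟩ := exists_isZeroSumSeq_insert_sum_count_lt hE hcard hn hord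
  obtain ⟨A, C, hA, -, rfl⟩ := hS.exists_isAtomSeq_add hS0
  refine (deltaSet_nonempty_iff hfin).2 ⟨A, hA, ?_⟩
  rcases hA.eq_replicate_or_eq_replicate_add_nsmul hE hcard (by omega) hord with
    ⟨x, -, rfl⟩ | ⟨a, ha, hAeq⟩
  · refine absurd (hlt x) (not_lt.2 ?_)
    rw [Multiset.count_add, Multiset.count_replicate_self]
    exact Nat.le_add_right _ _
  · have hcardA : card A = a + (n - a) * E.card := by
      rw [hAeq, card_add, card_replicate, card_nsmul, Finset.card_val]
    have hlarge : n < card A := by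
      have := Nat.mul_le_mul_left (n - a) hcard
      omega
    rw [crossNumber_eq_card_div fun g hg => hordAll g (hA.1.1 g hg)]
    refine ((one_lt_div (by positivity)).2 ?_).ne'
    exact_mod_cast hlarge

theorem isIndependentSet_range_of_linearIndependent {V R ι : Type*} [Ring R]
    [Nontrivial R] [AddCommGroup V] [Module R V] {b : ι → V} (hb : LinearIndependent R b)
    {f : V →+ G} (hf : Function.Injective f) : IsIndependentSet (Set.range (f ∘ b)) := by
  refine ⟨?_, fun s hs c hsum e he => ?_⟩
  · rintro ⟨i, hi⟩
    exact hb.ne_zero i ((map_eq_zero_iff f hf).1 hi)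
  obtain ⟨i, rfl⟩ := hs he
  have hinj : Function.Injective (f ∘ b) := hf.comp hb.injective
  have hpre : ∑ i ∈ s.preimage (f ∘ b) hinj.injOn, (c (f (b i)) : R) • b i = 0 := by
    refine hf ?_
    simp only [map_sum, Int.cast_smul_eq_zsmul, map_zsmul, _root_.map_zero]
    rw [← hsum]
    exact Finset.sum_preimage (f ∘ b) s hinj.injOn (fun e => c e • e)
      fun e he hrange => absurd (hs he) hrange
  have hci : (c (f (b i)) : R) = 0 :=
    linearIndependent_iff'.1 hb _ _ hpre i (Finset.mem_preimage.2 he)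
  rw [Function.comp_apply, ← map_zsmul, ← Int.cast_smul_eq_zsmul R, hci, zero_smul, _root_.map_zero]

end Independent

section RankBound

variable {G : Type*} [AddCommGroup G] [Finite G]

-- All atoms over `insert (∑ E) E` have weight `n` modulo `n (r - 1)`, where `r = |E|`, when `∑ E`
-- has weight `r` and the elements of `E` have weight `1`.
theorem IsIndependentSet.card_le_sSup_deltaStar_add_one {E : Finset G} {n : ℕ}
    (hE : IsIndependentSet (E : Set G)) (hn : 2 ≤ n) (hord : ∀ e ∈ E, addOrderOf e = n) :
    E.card ≤ sSup (DeltaStar G) + 1 := by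
  classical
  rcases Nat.lt_or_ge E.card 2 with hsmall | hcard
  · omega
  obtain ⟨k, hk⟩ := Nat.exists_eq_add_of_le hcard
  let w (x : G) : ZMod (n * (k + 1)) := if x = ∑ e ∈ E, e then (E.card : ℕ) else 1
  have hw₀ : w (∑ e ∈ E, e) = (E.card : ℕ) := if_pos rfl
  have hwE (e) (he : e ∈ E) : w e = 1 := if_neg (ne_of_mem_of_not_mem he (hE.sum_notMem hcard))
  have hmod : ((n * E.card : ℕ) : ZMod (n * (k + 1))) = (n : ℕ) := by
    rw [show n * E.card = n * (k + 1) + n by rw [hk]; ring, Nat.cast_add, ZMod.natCast_self,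
      zero_add]
  have hbound := addOrderOf_le_sSup_deltaStar (deltaSet_insert_sum_nonempty hE hcard hn hord) w
    (c := ((n : ℕ) : ZMod _)) fun A hA => ?_
  · rw [addOrderOf_natCast_zmod_mul (by omega) (by omega)] at hbound
    omega
  rcases hA.eq_replicate_or_eq_replicate_add_nsmul hE hcard (by omega) hord with
    ⟨x, hx, rfl⟩ | ⟨a, ha, rfl⟩
  · rw [Multiset.map_replicate, Multiset.sum_replicate]
    rcases hx with rfl | hx
    · rw [hw₀, nsmul_eq_mul, ← Nat.cast_mul, hmod]
    · rw [hwE x hx, nsmul_one]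
  · have hwsum : (E.val.map w).sum = (E.card : ℕ) := by
      rw [Multiset.map_congr rfl hwE, Multiset.map_const', Multiset.sum_replicate, nsmul_one,
        Finset.card_val]
    rw [Multiset.map_add, Multiset.map_replicate, Multiset.map_nsmul, Multiset.sum_add,
      Multiset.sum_replicate, Multiset.sum_nsmul, hw₀, hwsum, ← add_nsmul,
      Nat.add_sub_cancel' ha.le, nsmul_eq_mul, ← Nat.cast_mul, hmod]

theorem finrank_torsionBy_eq_pRank (p : ℕ) [Fact p.Prime]
    [Module (ZMod p) (AddSubgroup.torsionBy G p)] :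
    Module.finrank (ZMod p) (AddSubgroup.torsionBy G p) = pRank G p := by
  have hcard : Nat.card (AddSubgroup.torsionBy G p) = Nat.card {x : G // p • x = 0} :=
    Nat.card_congr (Equiv.subtypeEquivRight fun x => by simp)
  rw [pRank, ← hcard, ← FiniteField.pow_finrank_eq_natCard p,
    Nat.log_pow (Fact.out : p.Prime).one_lt]

theorem exists_isIndependentSet_card_eq_pRank (p : ℕ) [Fact p.Prime] :
    ∃ E : Finset G, IsIndependentSet (E : Set G) ∧ E.card = pRank G p ∧
      ∀ e ∈ E, addOrderOf e = p := by
  let := AddSubgroup.torsionBy.zmodModule (A := G) (n := p)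
  let b := Module.finBasis (ZMod p) (AddSubgroup.torsionBy G p)
  let f := (AddSubgroup.torsionBy G p).subtype
  have hf : Function.Injective f := Subtype.val_injective
  have hinj : Function.Injective (f ∘ b) := hf.comp b.injective
  refine ⟨Finset.univ.map ⟨f ∘ b, hinj⟩, ?_, ?_, fun e he => ?_⟩
  · simpa only [Finset.coe_map, Function.Embedding.coeFn_mk, Finset.coe_univ, Set.image_univ] using
      isIndependentSet_range_of_linearIndependent b.linearIndependent hf
  · rw [Finset.card_map, Finset.card_univ, Fintype.card_fin, finrank_torsionBy_eq_pRank]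
  · obtain ⟨i, -, rfl⟩ := Finset.mem_map.1 he
    refine (AddSubgroup.addOrderOf_coe (b i)).trans ?_
    exact addOrderOf_eq_prime (AddSubgroup.torsionBy.nsmul (b i)) (b.ne_zero i)

theorem rankG_le_sSup_deltaStar_add_one : rankG G ≤ sSup (DeltaStar G) + 1 := by
  obtain ⟨p, hp, hrank⟩ := exists_prime_pRank_eq_rankG (G := G)
  have : Fact p.Prime := ⟨hp⟩
  obtain ⟨E, hE, hcard, hord⟩ := exists_isIndependentSet_card_eq_pRank (G := G) p
  rw [← hrank, ← hcard]
  exact hE.card_le_sSup_deltaStar_add_one hp.two_le hord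

end RankBound

section Complement

variable {G : Type*} [AddCommGroup G] {G₀ : Finset G} {A B : Multiset G} {g : G}

/-- The sequence containing each `g ∈ G₀` with multiplicity `ord(g)`. -/
noncomputable def orderSeq (G₀ : Finset G) : Multiset G :=
  ∑ g ∈ G₀, Multiset.replicate (addOrderOf g) g

theorem crossNumber_orderSeq (hfin : ∀ g ∈ G₀, IsOfFinAddOrder g) :
    crossNumber (orderSeq G₀) = G₀.card := by
  rw [← Finset.card_val, ← Multiset.card_map]
  exact crossNumber_sum_eq_card <| Multiset.forall_mem_map_iff.2 fun g hg =>
    crossNumber_replicate_addOrderOf (hfin g hg)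

theorem card_mem_lengthSet_orderSeq (hfin : ∀ g ∈ G₀, IsOfFinAddOrder g) :
    G₀.card ∈ LengthSet (G₀ : Set G) (orderSeq G₀) := by
  rw [← Finset.card_val, ← Multiset.card_map]
  exact card_mem_lengthSet <| Multiset.forall_mem_map_iff.2 fun g hg =>
    isAtomSeq_replicate_addOrderOf (hfin g hg) hg

theorem count_orderSeq_of_mem [DecidableEq G] (hg : g ∈ G₀) :
    (orderSeq G₀).count g = addOrderOf g := by
  rw [orderSeq, Multiset.count_sum', Finset.sum_eq_single_of_mem g hg,
    Multiset.count_replicate_self]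
  exact fun x _ hx => (Multiset.count_replicate _ _ _).trans (if_neg hx)

theorem IsAtomSeq.le_orderSeq (hfin : ∀ g ∈ G₀, IsOfFinAddOrder g)
    (hA : IsAtomSeq (G₀ : Set G) A) (hk : crossNumber A ≠ 1) : A ≤ orderSeq G₀ := by
  classical
  refine Multiset.le_iff_count.2 fun g => ?_
  by_cases hg : g ∈ G₀
  · rw [count_orderSeq_of_mem hg]
    exact (hA.count_lt_addOrderOf hfin hk hg).le
  · rw [Multiset.count_eq_zero.2 fun h => hg (hA.1.1 g h)]
    exact Nat.zero_le _

theorem IsAtomSeq.val_le_of_add_eq_orderSeq (hfin : ∀ g ∈ G₀, IsOfFinAddOrder g)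
    (hA : IsAtomSeq (G₀ : Set G) A) (hk : crossNumber A ≠ 1) (hAB : A + B = orderSeq G₀) :
    G₀.val ≤ B := by
  classical
  refine (Multiset.le_iff_subset G₀.nodup).2 fun g hg => ?_
  have hcount : A.count g + B.count g = addOrderOf g := by
    rw [← Multiset.count_add, hAB, count_orderSeq_of_mem hg]
  have hlt := hA.count_lt_addOrderOf hfin hk hg
  exact Multiset.count_pos.1 (by omega)

theorem IsLCNSet.card_add_sInf_deltaSet_lt_card (hLCN : IsLCNSet (G₀ : Set G))
    (hfin : ∀ g ∈ G₀, IsOfFinAddOrder g) (hA : IsAtomSeq (G₀ : Set G) A)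
    (hk : 1 < crossNumber A) {l : Multiset (Multiset G)}
    (hl : ∀ V ∈ l, IsAtomSeq (G₀ : Set G) V) (hAl : A + l.sum = orderSeq G₀) :
    card l + sInf (DeltaSet (G₀ : Set G)) < G₀.card := by
  have hcard : card l + 1 < G₀.card := by
    have hkl := card_le_crossNumber_sum fun V hV => hLCN V (hl V hV)
    have hkS := crossNumber_orderSeq hfin
    rw [← hAl, crossNumber_add] at hkS
    exact_mod_cast (by linarith : (card l : ℚ) + 1 < G₀.card)
  have hlength : card l + 1 ∈ LengthSet (G₀ : Set G) (orderSeq G₀) := by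
    rw [← hAl, ← Multiset.sum_cons, ← Multiset.card_cons]
    exact card_mem_lengthSet (Multiset.forall_mem_cons.2 ⟨hA, hl⟩)
  have hle := Nat.le_of_dvd (by omega)
    (sInf_deltaSet_dvd hlength (card_mem_lengthSet_orderSeq hfin) hcard.le)
  omega

theorem IsLCNSet.isAtomSeq_of_add_eq_orderSeq (hLCN : IsLCNSet (G₀ : Set G))
    (hfin : ∀ g ∈ G₀, IsOfFinAddOrder g) (hA : IsAtomSeq (G₀ : Set G) A)
    (hk : 1 < crossNumber A) (hcard : G₀.card ≤ sInf (DeltaSet (G₀ : Set G)) + 2)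
    (hAB : A + B = orderSeq G₀) :
    IsAtomSeq (G₀ : Set G) B ∧ G₀.card = sInf (DeltaSet (G₀ : Set G)) + 2 := by
  have hS := isZeroSumSeq_of_mem_lengthSet (card_mem_lengthSet_orderSeq hfin)
  rw [← hAB] at hS
  obtain ⟨l, hl, rfl⟩ := exists_sum_eq_of_isZeroSumSeq (hS.of_add_left hA.1.2)
  have hlt := hLCN.card_add_sInf_deltaSet_lt_card hfin hA hk hl hAB
  have hl0 : l ≠ 0 := by
    rintro rfl
    obtain ⟨g, hg⟩ := Multiset.exists_mem_of_ne_zero hA.2.1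
    exact Multiset.notMem_zero g <|
      Multiset.mem_of_le (hA.val_le_of_add_eq_orderSeq hfin hk.ne' hAB) (hA.1.1 g hg)
  have hlpos := Multiset.card_pos.2 hl0
  obtain ⟨V, rfl⟩ := Multiset.card_eq_one.1 (by omega : card l = 1)
  rw [Multiset.card_singleton] at hlt
  exact ⟨by simpa using hl, by omega⟩

theorem IsMinNonHalfFactorial.crossNumber_add_one_lt_card
    (hmin : IsMinNonHalfFactorial (G₀ : Set G)) (hLCN : IsLCNSet (G₀ : Set G))
    (hfin : ∀ g ∈ G₀, IsOfFinAddOrder g) (hord : ∀ g ∈ G₀, addOrderOf g ≤ G₀.card)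
    (hA : IsAtomSeq (G₀ : Set G) A) (hk : 1 < crossNumber A) (hB : IsAtomSeq (G₀ : Set G) B)
    (hAB : A + B = orderSeq G₀) : crossNumber A + 1 < G₀.card := by
  rw [← crossNumber_orderSeq hfin, ← hAB, crossNumber_add, add_lt_add_iff_left]
  refine lt_of_le_of_ne (hLCN B hB) fun hkB => hmin.not_nodup hfin hA hk.ne' ⟨hB, hkB.symm⟩ ?_
  have hcardB : card B ≤ G₀.card := by
    have := card_le_mul_crossNumber (q := G₀.card) (fun g hg => hfin g (hB.1.1 g hg))
      fun g hg => Nat.cast_le.2 (hord g (hB.1.1 g hg))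
    rw [← hkB, mul_one] at this
    exact_mod_cast this
  rw [← Multiset.eq_of_le_of_card_le (hA.val_le_of_add_eq_orderSeq hfin hk.ne' hAB) hcardB]
  exact G₀.nodup

end Complement

theorem stmt_14_general {G : Type*} [AddCommGroup G] [Finite G] [DecidableEq G] (G₀ : Finset G)
    (hmin : IsMinNonHalfFactorial (G₀ : Set G)) (hLCN : IsLCNSet (G₀ : Set G))
    (hord : ∀ g ∈ G₀, addOrderOf g ≤ sInf (DeltaSet (G₀ : Set G)) + 2)
    (hrank : rankG G ≤ sInf (DeltaSet (G₀ : Set G)) + 1)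
    (A : Multiset G) (hA : IsAtomSeq (G₀ : Set G) A) (hk : 1 < crossNumber A) :
    crossNumber A < rankG G ∧ IsAtomSeq (G₀ : Set G) (orderSeq G₀ - A) := by
  have hfin : ∀ g ∈ G₀, IsOfFinAddOrder g := fun g _ => isOfFinAddOrder_of_finite g
  have hcard := hmin.card_le_rankG_add_one hLCN hord
  have hAB : A + (orderSeq G₀ - A) = orderSeq G₀ :=
    add_tsub_cancel_of_le (hA.le_orderSeq hfin hk.ne')
  obtain ⟨hB, hcard_eq⟩ := hLCN.isAtomSeq_of_add_eq_orderSeq hfin hA hk (by omega) hAB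
  have hkA := hmin.crossNumber_add_one_lt_card hLCN hfin (hcard_eq ▸ hord) hA hk hB hAB
  refine ⟨?_, hB⟩
  have : (G₀.card : ℚ) ≤ rankG G + 1 := by exact_mod_cast hcard
  linarith

/-- If `G₀` is a minimal non-half-factorial LCN-set with
`min Δ(G₀) = max Δ*(G)` and `S = ∏_{g ∈ G₀} g^{ord(g)}`, then every atom `A` over `G₀`
with `k(A) > 1` satisfies `k(A) < r(G)`, and `S − A` is again an atom over `G₀`. -/
theorem stmt_14 {G : Type*} [AddCommGroup G] [Fintype G] [DecidableEq G] (G₀ : Finset G)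
    (hmin : IsMinNonHalfFactorial (↑G₀ : Set G)) (hLCN : IsLCNSet (↑G₀ : Set G))
    (hmax : sInf (DeltaSet (↑G₀ : Set G)) = sSup (DeltaStar G))
    (S : Multiset G) (hS : S = ∑ g ∈ G₀, Multiset.replicate (addOrderOf g) g) :
    ∀ A : Multiset G, IsAtomSeq (↑G₀ : Set G) A → 1 < crossNumber A →
      crossNumber A < (rankG G : ℚ) ∧ IsAtomSeq (↑G₀ : Set G) (S - A) := by
  subst hS
  exact stmt_14_general G₀ hmin hLCN (fun g _ => hmax ▸ addOrderOf_le_sSup_deltaStar_add_two g)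
    (hmax ▸ rankG_le_sSup_deltaStar_add_one)
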